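/- arXiv:1406.1887 — 3 statements merged into one kernel-verified Lean document; each statement's English description precedes it below -/
import Mathlib

section
/- There exists n₀ such that for every n ≥ n₀ the following holds: if F ⊆ 2^[n] contains some member of Σ*(n,2) as a subfamily and |F| ≥ Σ(n,2), then the number of copies of the butterfly contained in F is at least (|F| − Σ(n,2))·f(n). -/
def IsButterfly {n : ℕ} (S : Finset (Finset (Fin n))) : Prop :=
  ∃ A B C D : Finset (Fin n), S = {A, B, C, D} ∧ A ≠ B ∧ C ≠ D ∧
    A ⊂ C ∧ A ⊂ D ∧ B ⊂ C ∧ B ⊂ D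

open Classical in
/-- The number of copies of the butterfly contained in `F` (copies are counted as
image sets, i.e. 4-element subfamilies forming a butterfly). -/
noncomputable def numButterflies {n : ℕ} (F : Finset (Finset (Fin n))) : ℕ :=
  (F.powerset.filter (fun S => IsButterfly S)).card

def Sigma2 (n : ℕ) : ℕ := n.choose (n / 2) + n.choose (n / 2 + 1)

def levelFam (n k : ℕ) : Finset (Finset (Fin n)) :=
  Finset.univ.filter (fun S => S.card = k)

def SigmaStar (n : ℕ) : Set (Finset (Finset (Fin n))) :=
  { levelFam n (n / 2) ∪ levelFam n (n / 2 + 1),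
    levelFam n ((n + 1) / 2 - 1) ∪ levelFam n ((n + 1) / 2) }

/-- `f(n) = (⌈n/2⌉+1)·C(⌈n/2⌉,2)`. -/
def fB (n : ℕ) : ℕ := ((n + 1) / 2 + 1) * Nat.choose ((n + 1) / 2) 2

open Classical in
noncomputable def Bf {n : ℕ} (F : Finset (Finset (Fin n))) (m : ℕ) (X : Finset (Fin n)) :
    Finset (Finset (Finset (Fin n))) :=
  F.powerset.filter (fun S => IsButterfly S ∧ X ∈ S ∧
    ∀ Y ∈ S, Y ≠ X → Y.card = m ∨ Y.card = m + 1)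

theorem mem_Bf {n : ℕ} (F : Finset (Finset (Fin n))) (m : ℕ) (X : Finset (Fin n))
    (S : Finset (Finset (Fin n))) : S ∈ Bf F m X ↔ S ⊆ F ∧ IsButterfly S ∧ X ∈ S ∧
    ∀ Y ∈ S, Y ≠ X → Y.card = m ∨ Y.card = m + 1 := by
  simp [Bf]

theorem up_count {n : ℕ} (F : Finset (Finset (Fin n))) (m : ℕ) (X : Finset (Fin n))
    (hL : ∀ Y : Finset (Fin n), Y.card = m ∨ Y.card = m + 1 → Y ∈ F)
    (hX : X ∈ F) (hc : m + 2 ≤ X.card) :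
    (m + 2) * Nat.choose (m + 1) 2 ≤ (Bf F m X).card := by
  classical
  set T : Finset ((_ : Finset (Fin n)) × Finset (Finset (Fin n))) :=
    (Finset.powersetCard (m + 1) X).sigma
      (fun C => Finset.powersetCard 2 (Finset.powersetCard m C)) with hT
  have hTc : T.card = X.card.choose (m + 1) * Nat.choose (m + 1) 2 := by
    rw [hT, Finset.card_sigma, Finset.sum_congr rfl (g := fun _ => Nat.choose (m + 1) 2)]
    · simp
    · intro C hC
      rw [Finset.mem_powersetCard] at hC
      simp [hC.2]
  have h1 : m + 2 ≤ X.card.choose (m + 1) := by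
    calc m + 2 = (m + 2).choose (m + 1) := by
          rw [Nat.choose_succ_self_right (m + 1)]
      _ ≤ _ := Nat.choose_le_choose _ hc
  have h2 : T.card ≤ (Bf F m X).card := by
    have key : ∀ p ∈ T, (p.1 ⊆ X ∧ p.1.card = m + 1) ∧
        (∀ Y ∈ p.2, Y ⊆ p.1 ∧ Y.card = m) ∧ p.2.card = 2 := by
      intro p hp
      rw [hT, Finset.mem_sigma, Finset.mem_powersetCard, Finset.mem_powersetCard] at hp
      refine ⟨hp.1, fun Y hY => ?_, hp.2.2⟩
      have := hp.2.1 hY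
      rwa [Finset.mem_powersetCard] at this
    have inj1 : ∀ p ∈ T, (insert X (insert p.1 p.2)).filter (fun Y => Y.card = m) = p.2 := by
      intro p hp
      obtain ⟨⟨a, b⟩, c, d⟩ := key p hp
      ext Y
      simp only [Finset.mem_filter, Finset.mem_insert]
      constructor
      · rintro ⟨rfl | rfl | h, h'⟩
        · omega
        · omega
        · exact h
      · intro h
        exact ⟨Or.inr (Or.inr h), (c Y h).2⟩
    have inj2 : ∀ p ∈ T,
        (insert X (insert p.1 p.2)).filter (fun Y => Y.card = m + 1) = {p.1} := by
      intro p hp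
      obtain ⟨⟨a, b⟩, c, d⟩ := key p hp
      ext Y
      simp only [Finset.mem_filter, Finset.mem_insert, Finset.mem_singleton]
      constructor
      · rintro ⟨rfl | rfl | h, h'⟩
        · omega
        · rfl
        · have := (c Y h).2
          omega
      · rintro rfl
        exact ⟨Or.inr (Or.inl rfl), b⟩
    apply Finset.card_le_card_of_injOn (fun p => insert X (insert p.1 p.2))
    · intro p hp
      obtain ⟨⟨a, b⟩, c, d⟩ := key p hp
      simp only [Finset.mem_coe]
      rw [mem_Bf]
      refine ⟨?_, ?_, ?_, ?_⟩
      · intro Y hY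
        simp only [Finset.mem_insert] at hY
        rcases hY with rfl | rfl | h
        · exact hX
        · exact hL _ (Or.inr b)
        · exact hL _ (Or.inl (c Y h).2)
      · obtain ⟨A, B, hAB, hp2⟩ := Finset.card_eq_two.1 d
        have ss : ∀ U V : Finset (Fin n), U ⊆ V → U.card < V.card → U ⊂ V := by
          intro U V h h'
          refine Finset.ssubset_iff_subset_ne.2 ⟨h, ?_⟩
          rintro rfl
          omega
        have hA := c A (by simp [hp2])
        have hB := c B (by simp [hp2])
        refine ⟨A, B, p.1, X, ?_, hAB, ?_, ss _ _ hA.1 (by omega),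
          ss _ _ (hA.1.trans a) (by omega), ss _ _ hB.1 (by omega),
          ss _ _ (hB.1.trans a) (by omega)⟩
        · rw [hp2]
          ext Y
          simp only [Finset.mem_insert, Finset.mem_singleton]
          tauto
        · intro h
          rw [h] at b
          omega
      · simp
      · intro Y hY hne
        simp only [Finset.mem_insert] at hY
        rcases hY with rfl | rfl | h
        · exact absurd rfl hne
        · exact Or.inr b
        · exact Or.inl (c Y h).2
    · intro p hp q hq h
      simp only at h
      have e1 := inj1 p hp
      have e2 := inj2 p hp
      rw [h] at e1 e2
      rw [inj1 q hq] at e1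
      rw [inj2 q hq] at e2
      have e3 := Finset.singleton_injective e2
      obtain ⟨p1, p2⟩ := p
      obtain ⟨q1, q2⟩ := q
      simp only at e1 e3
      rw [e1, e3]
  calc _ ≤ _ := Nat.mul_le_mul_right _ h1
    _ = T.card := hTc.symm
    _ ≤ _ := h2

theorem butterfly_compl {n : ℕ} (S : Finset (Finset (Fin n))) (h : IsButterfly S) :
    IsButterfly (S.image compl) := by
  obtain ⟨A, B, C, D, rfl, h1, h2, h3, h4, h5, h6⟩ := h
  refine ⟨Cᶜ, Dᶜ, Aᶜ, Bᶜ, ?_, ?_, ?_, ?_, ?_, ?_, ?_⟩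
  · ext Y
    simp only [Finset.mem_image, Finset.mem_insert, Finset.mem_singleton]
    constructor
    · rintro ⟨Z, rfl | rfl | rfl | rfl, rfl⟩ <;> simp
    · rintro (rfl | rfl | rfl | rfl)
      exacts [⟨C, by simp⟩, ⟨D, by simp⟩, ⟨A, by simp⟩, ⟨B, by simp⟩]
  · simpa using h2
  · simpa using h1
  all_goals exact compl_lt_compl_iff_lt.2 (by assumption)

theorem down_count {n : ℕ} (F : Finset (Finset (Fin n))) (m : ℕ) (hm : m + 1 ≤ n)
    (X : Finset (Fin n))
    (hL : ∀ Y : Finset (Fin n), Y.card = m ∨ Y.card = m + 1 → Y ∈ F)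
    (hX : X ∈ F) (hc : X.card + 1 ≤ m) :
    (n - m + 1) * Nat.choose (n - m) 2 ≤ (Bf F m X).card := by
  classical
  have cc : ∀ Y : Finset (Fin n), Yᶜ.card + Y.card = n := by
    intro Y
    have := Finset.card_compl_add_card Y
    simpa using this
  have h := up_count (F.image compl) (n - m - 1) Xᶜ ?_ ?_ ?_
  · have e : n - m - 1 + 1 = n - m := by omega
    have e' : n - m - 1 + 2 = n - m + 1 := by omega
    rw [e, e'] at h
    refine h.trans ?_
    apply Finset.card_le_card_of_injOn (fun S => S.image compl)
    · intro S hS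
      simp only [Finset.mem_coe] at hS ⊢
      rw [mem_Bf] at hS ⊢
      obtain ⟨a, b, c, d⟩ := hS
      refine ⟨?_, butterfly_compl _ b, ?_, ?_⟩
      · intro Y hY
        obtain ⟨Z, hZ, rfl⟩ := Finset.mem_image.1 hY
        obtain ⟨W, hW, rfl⟩ := Finset.mem_image.1 (a hZ)
        simpa using hW
      · exact Finset.mem_image.2 ⟨_, c, by simp⟩
      · intro Y hY hne
        obtain ⟨Z, hZ, rfl⟩ := Finset.mem_image.1 hY
        have := d Z hZ (by rintro rfl; simp at hne)
        have := cc Z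
        omega
    · exact (Finset.image_injective compl_injective).injOn
  · intro Y hY
    refine Finset.mem_image.2 ⟨Yᶜ, hL _ ?_, by simp⟩
    have := cc Y
    omega
  · exact Finset.mem_image_of_mem _ hX
  · have := cc X
    omega

theorem main_count {n : ℕ} (F : Finset (Finset (Fin n))) (m : ℕ) (hm : m + 1 ≤ n)
    (h1 : (n + 1) / 2 ≤ m + 1) (h2 : (n + 1) / 2 ≤ n - m)
    (hL : levelFam n m ∪ levelFam n (m + 1) ⊆ F)
    (hs : n.choose m + n.choose (m + 1) = Sigma2 n) :
    (F.card - Sigma2 n) * fB n ≤ numButterflies F := by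
  classical
  set L := levelFam n m ∪ levelFam n (m + 1) with hLd
  have memL : ∀ Y : Finset (Fin n), Y ∈ L ↔ Y.card = m ∨ Y.card = m + 1 := by
    intro Y
    simp [hLd, levelFam]
  have cl : ∀ k, (levelFam n k).card = n.choose k := by
    intro k
    have : levelFam n k = Finset.powersetCard k Finset.univ := by
      ext Y
      simp [levelFam, Finset.mem_powersetCard]
    rw [this]
    simp
  have cL : L.card = Sigma2 n := by
    rw [hLd, Finset.card_union_of_disjoint, cl, cl, hs]
    rw [Finset.disjoint_left]
    intro Y a b
    simp [levelFam] at a b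
    omega
  have hL' : ∀ Y : Finset (Fin n), Y.card = m ∨ Y.card = m + 1 → Y ∈ F :=
    fun Y hY => hL ((memL Y).2 hY)
  have cF : (F \ L).card = F.card - Sigma2 n := by
    rw [Finset.card_sdiff_of_subset hL, cL]
  have each : ∀ X ∈ F \ L, fB n ≤ (Bf F m X).card := by
    intro X hX
    rw [Finset.mem_sdiff, memL] at hX
    obtain ⟨a, b⟩ := hX
    rcases Nat.lt_or_ge X.card m with c | c
    · refine le_trans ?_ (down_count F m hm X hL' a (by omega))
      exact Nat.mul_le_mul (by omega) (Nat.choose_le_choose _ h2)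
    · refine le_trans ?_ (up_count F m X hL' a (by omega))
      exact Nat.mul_le_mul (by omega) (Nat.choose_le_choose _ h1)
  rw [← cF, ← smul_eq_mul]
  refine (Finset.card_nsmul_le_sum _ _ _ each).trans ?_
  rw [← Finset.card_biUnion]
  · apply Finset.card_le_card
    intro S hS
    obtain ⟨X, _, hS⟩ := Finset.mem_biUnion.1 hS
    rw [mem_Bf] at hS
    simp [hS.1, hS.2.1]
  · intro X hX Y hY hne
    rw [Function.onFun, Finset.disjoint_left]
    intro S hS hS'
    rw [mem_Bf] at hS hS'
    simp only [Finset.coe_sdiff, Set.mem_diff, Finset.mem_coe, memL] at hY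
    exact hY.2 (hS.2.2.2 Y hS'.2.2.1 hne.symm)

/-- If `F` contains some member of `Σ*(n,2)` as a subfamily and `|F| ≥ Σ(n,2)`, then `F`
contains at least `(|F| − Σ(n,2))·f(n)` copies of the butterfly. -/
theorem supersat_of_contains_sigmastar :
    ∃ n₀ : ℕ, ∀ n : ℕ, n₀ ≤ n → ∀ F : Finset (Finset (Fin n)),
      (∃ S ∈ SigmaStar n, S ⊆ F) → Sigma2 n ≤ F.card →
      (F.card - Sigma2 n) * fB n ≤ numButterflies F := by
  refine ⟨2, ?_⟩
  rintro n hn F ⟨S, hS, hSF⟩ _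
  rcases hS with rfl | hS
  · exact main_count F (n / 2) (by omega) (by omega) (by omega) hSF rfl
  · rw [Set.mem_singleton_iff] at hS
    subst hS
    have e : (n + 1) / 2 - 1 + 1 = (n + 1) / 2 := by omega
    refine main_count F ((n + 1) / 2 - 1) (by omega) (by omega) (by omega) (by rwa [e]) ?_
    rw [e, Sigma2]
    rcases Nat.even_or_odd' n with ⟨k, rfl | rfl⟩
    · have a : (2 * k + 1) / 2 = k := by omega
      have b : 2 * k / 2 = k := by omega
      rw [a, b, add_comm, Nat.choose_symm_of_eq_add (show 2 * k = (k - 1) + (k + 1) by omega)]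
    · have a : (2 * k + 1 + 1) / 2 = k + 1 := by omega
      have b : (2 * k + 1) / 2 = k := by omega
      rw [a, b]
      rfl
end

section
/- There exists n₀ such that for every n ≥ n₀ the following holds: let E ⊆ {S ⊆ [n] : |S| = ⌈n/2⌉+1} be a family such that |E₁ ∩ E₂| < ⌈n/2⌉ for all distinct E₁, E₂ ∈ E, and let F = {S ⊆ [n] : |S| = ⌈n/2⌉−1} ∪ {S ⊆ [n] : |S| = ⌈n/2⌉} ∪ E. Then the number of copies of the butterfly contained in F is exactly |E|·f(n). -/
theorem core_shape {n m : ℕ} (hm : 1 ≤ m) {E : Finset (Finset (Fin n))}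
    (hE : ∀ S ∈ E, S.card = m + 1)
    (hc : ∀ E₁ ∈ E, ∀ E₂ ∈ E, E₁ ≠ E₂ → (E₁ ∩ E₂).card < m)
    {A B C D : Finset (Fin n)}
    (hA : A.card = m - 1 ∨ A.card = m ∨ A ∈ E)
    (hB : B.card = m - 1 ∨ B.card = m ∨ B ∈ E)
    (hC : C.card = m - 1 ∨ C.card = m ∨ C ∈ E)
    (hD : D.card = m - 1 ∨ D.card = m ∨ D ∈ E)
    (hAB : A ≠ B) (hCD : C ≠ D) (h1 : A ⊂ C) (h2 : A ⊂ D) (h3 : B ⊂ C) (h4 : B ⊂ D) :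
    A.card = m - 1 ∧ B.card = m - 1 ∧
      ((C ∈ E ∧ D.card = m ∧ D ⊆ C) ∨ (D ∈ E ∧ C.card = m ∧ C ⊆ D)) := by
  have c1 := Finset.card_lt_card h1
  have c2 := Finset.card_lt_card h2
  have c3 := Finset.card_lt_card h3
  have c4 := Finset.card_lt_card h4
  have hA' : m - 1 ≤ A.card := by
    rcases hA with h | h | h
    · omega
    · omega
    · have := hE _ h; omega
  have hB' : m - 1 ≤ B.card := by
    rcases hB with h | h | h
    · omega
    · omega
    · have := hE _ h; omega
  have hi : A ∪ B ⊆ C ∩ D :=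
    Finset.union_subset (Finset.subset_inter h1.1 h2.1) (Finset.subset_inter h3.1 h4.1)
  have hu : m ≤ (A ∪ B).card := by
    by_contra hlt
    have hA2 : A = A ∪ B := Finset.eq_of_subset_of_card_le Finset.subset_union_left (by omega)
    have hB2 : B = A ∪ B := Finset.eq_of_subset_of_card_le Finset.subset_union_right (by omega)
    exact hAB (hA2.trans hB2.symm)
  have hi2 : m ≤ (C ∩ D).card := hu.trans (Finset.card_le_card hi)
  have key : ∀ X Y : Finset (Fin n), X.card = m → m ≤ (X ∩ Y).card → X ⊆ Y := by
    intro X Y hX hXY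
    have : X ∩ Y = X := Finset.eq_of_subset_of_card_le Finset.inter_subset_left (by omega)
    exact Finset.inter_eq_left.mp this
  rcases hC with h | hC | hC
  · omega
  · have hs := key C D hC hi2
    rcases hD with h | hD | hD
    · omega
    · exact absurd (Finset.eq_of_subset_of_card_le hs (by omega)) hCD
    · exact ⟨by omega, by omega, Or.inr ⟨hD, hC, hs⟩⟩
  · rcases hD with h | hD | hD
    · omega
    · exact ⟨by omega, by omega, Or.inl ⟨hC, hD, key D C hD (by rwa [Finset.inter_comm])⟩⟩
    · have := hc C hC D hD hCD
      omega

theorem pair_inj {n m : ℕ} (hm : 1 ≤ m) {C C' D D' : Finset (Fin n)}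
    {P P' : Finset (Finset (Fin n))}
    (hC : C.card = m + 1) (hC' : C'.card = m + 1) (hD : D.card = m) (hD' : D'.card = m)
    (hP : ∀ X ∈ P, X.card = m - 1) (hP' : ∀ X ∈ P', X.card = m - 1)
    (h : insert C (insert D P) = insert C' (insert D' P')) : C = C' ∧ D = D' ∧ P = P' := by
  have hx : ∀ X, (X = C ∨ X = D ∨ X ∈ P) ↔ (X = C' ∨ X = D' ∨ X ∈ P') := by
    intro X
    have := Finset.ext_iff.mp h X
    simpa using this
  refine ⟨?_, ?_, ?_⟩
  · rcases (hx C).1 (Or.inl rfl) with h | h | h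
    · exact h
    · rw [h] at hC; omega
    · have := hP' _ h; omega
  · rcases (hx D).1 (Or.inr (Or.inl rfl)) with h | h | h
    · rw [h] at hD; omega
    · exact h
    · have := hP' _ h; omega
  · ext X
    constructor
    · intro hX
      have hXc := hP _ hX
      rcases (hx X).1 (Or.inr (Or.inr hX)) with h | h | h
      · rw [h] at hXc; omega
      · rw [h] at hXc; omega
      · exact h
    · intro hX
      have hXc := hP' _ hX
      rcases (hx X).2 (Or.inr (Or.inr hX)) with h | h | h
      · rw [h] at hXc; omega
      · rw [h] at hXc; omega
      · exact h

/-- If `E` consists of sets of size `⌈n/2⌉+1` with pairwise intersections of size `< ⌈n/2⌉`,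
then the two middle levels together with `E` contain exactly `|E|·f(n)` butterflies. -/
theorem exact_count_middle_levels_plus_code :
    ∃ n₀ : ℕ, ∀ n : ℕ, n₀ ≤ n → ∀ E : Finset (Finset (Fin n)),
      E ⊆ levelFam n ((n + 1) / 2 + 1) →
      (∀ E₁ ∈ E, ∀ E₂ ∈ E, E₁ ≠ E₂ → (E₁ ∩ E₂).card < (n + 1) / 2) →
      numButterflies (levelFam n ((n + 1) / 2 - 1) ∪ levelFam n ((n + 1) / 2) ∪ E)
        = E.card * fB n := by
  classical
  refine ⟨1, ?_⟩
  intro n hn E hE hc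
  unfold fB
  have hm : 1 ≤ (n + 1) / 2 := by omega
  generalize (n + 1) / 2 = m at *
  have hE' : ∀ S ∈ E, S.card = m + 1 := by
    intro S hS
    simpa [levelFam] using hE hS
  have hF : ∀ X, X ∈ levelFam n (m - 1) ∪ levelFam n m ∪ E ↔
      (X.card = m - 1 ∨ X.card = m ∨ X ∈ E) := by
    intro X; simp [levelFam, or_assoc]
  set T := E.sigma (fun C => (Finset.powersetCard m C).sigma
    (fun D => Finset.powersetCard 2 (Finset.powersetCard (m - 1) D))) with hT
  have hTc : T.card = E.card * ((m + 1) * Nat.choose m 2) := by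
    rw [hT, Finset.card_sigma, Finset.sum_const_nat]
    intro C hC
    rw [Finset.card_sigma, Finset.sum_const_nat (m := Nat.choose m 2)]
    · rw [Finset.card_powersetCard, hE' C hC, Nat.choose_succ_self_right]
    · intro D hD
      rw [Finset.mem_powersetCard] at hD
      rw [Finset.card_powersetCard, Finset.card_powersetCard, hD.2,
        Nat.choose_symm_of_eq_add (show m = (m - 1) + 1 by omega), Nat.choose_one_right]
  rw [← hTc]
  unfold numButterflies
  symm
  refine Finset.card_bij (fun t _ => insert t.1 (insert t.2.1 t.2.2)) ?_ ?_ ?_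
  · rintro ⟨C, D, P⟩ ht
    simp only [hT, Finset.mem_sigma, Finset.mem_powersetCard] at ht
    obtain ⟨hC, ⟨hDC, hD⟩, hP, hP2⟩ := ht
    obtain ⟨A, B, hAB, rfl⟩ := Finset.card_eq_two.mp hP2
    have hA := Finset.mem_powersetCard.mp (hP (show A ∈ ({A, B} : Finset _) by simp))
    have hB := Finset.mem_powersetCard.mp (hP (show B ∈ ({A, B} : Finset _) by simp))
    have hCc := hE' C hC
    have ss : ∀ X Y : Finset (Fin n), X ⊆ Y → X.card < Y.card → X ⊂ Y := by
      intro X Y h h'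
      refine Finset.ssubset_iff_subset_ne.mpr ⟨h, ?_⟩
      rintro rfl; omega
    rw [Finset.mem_filter, Finset.mem_powerset]
    refine ⟨?_, A, B, C, D, ?_, hAB, ?_, ?_, ?_, ?_, ?_⟩
    · intro X hX
      rw [hF]
      simp only [Finset.mem_insert, Finset.mem_singleton] at hX
      rcases hX with rfl | rfl | rfl | rfl
      · exact Or.inr (Or.inr hC)
      · exact Or.inr (Or.inl hD)
      · exact Or.inl hA.2
      · exact Or.inl hB.2
    · ext X; simp only [Finset.mem_insert, Finset.mem_singleton]; tauto
    · rintro rfl; omega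
    · exact ss _ _ (hA.1.trans hDC) (by omega)
    · exact ss _ _ hA.1 (by omega)
    · exact ss _ _ (hB.1.trans hDC) (by omega)
    · exact ss _ _ hB.1 (by omega)
  · rintro ⟨C, D, P⟩ ht ⟨C', D', P'⟩ ht' h
    simp only [hT, Finset.mem_sigma, Finset.mem_powersetCard] at ht ht'
    obtain ⟨hC, ⟨hDC, hD⟩, hP, hP2⟩ := ht
    obtain ⟨hC', ⟨hDC', hD'⟩, hP', hP2'⟩ := ht'
    obtain ⟨rfl, rfl, rfl⟩ := pair_inj hm (hE' _ hC) (hE' _ hC') hD hD'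
      (fun X hX => (Finset.mem_powersetCard.mp (hP hX)).2)
      (fun X hX => (Finset.mem_powersetCard.mp (hP' hX)).2) h
    rfl
  · intro S hS
    rw [Finset.mem_filter, Finset.mem_powerset] at hS
    obtain ⟨hSF, A, B, C, D, rfl, hAB, hCD, h1, h2, h3, h4⟩ := hS
    have g : ∀ X, X ∈ ({A, B, C, D} : Finset (Finset (Fin n))) →
      (X.card = m - 1 ∨ X.card = m ∨ X ∈ E) := fun X hX => (hF X).1 (hSF hX)
    obtain ⟨hA, hB, h⟩ := core_shape hm hE' hc (g A (by simp)) (g B (by simp)) (g C (by simp))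
      (g D (by simp)) hAB hCD h1 h2 h3 h4
    have hPs : ∀ Y : Finset (Fin n), A ⊆ Y → B ⊆ Y →
        ({A, B} : Finset (Finset (Fin n))) ⊆ Finset.powersetCard (m - 1) Y := by
      intro Y hAY hBY X hX
      simp only [Finset.mem_insert, Finset.mem_singleton] at hX
      rw [Finset.mem_powersetCard]
      rcases hX with rfl | rfl
      · exact ⟨hAY, hA⟩
      · exact ⟨hBY, hB⟩
    rcases h with ⟨hC, hD, hs⟩ | ⟨hD, hC, hs⟩
    · refine ⟨⟨C, D, {A, B}⟩, ?_, ?_⟩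
      · simp only [hT, Finset.mem_sigma, Finset.mem_powersetCard]
        exact ⟨hC, ⟨hs, hD⟩, hPs D h2.1 h4.1, Finset.card_pair hAB⟩
      · ext X; simp only [Finset.mem_insert, Finset.mem_singleton]; tauto
    · refine ⟨⟨D, C, {A, B}⟩, ?_, ?_⟩
      · simp only [hT, Finset.mem_sigma, Finset.mem_powersetCard]
        exact ⟨hD, ⟨hs, hC⟩, hPs C h1.1 h3.1, Finset.card_pair hAB⟩
      · ext X; simp only [Finset.mem_insert, Finset.mem_singleton]; tauto
end

section
/- For all real ε ∈ (0,1) and δ ∈ (0,1) there exists n₀ such that for every n ≥ n₀ and every integer E with 1 ≤ E ≤ 2^(n^(1−ε)), every family F ⊆ 2^[n] with |F| = Σ(n,2) + E contains at least (1−δ)·E·f(n) copies of the butterfly. -/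
section BFchain
open Finset Fintype Numbering

variable {X : Type*} [Fintype X] [DecidableEq X]

noncomputable def bfMix (B : Finset X) (s t : Numbering X) : Numbering X :=
  if h : Function.Bijective (fun x => if x ∈ B then s x else t x) then Equiv.ofBijective _ h else s

lemma bfMix_apply {B : Finset X} {s t : Numbering X} (hs : s.IsPrefix B) (ht : t.IsPrefix B) (x : X) :
    bfMix B s t x = if x ∈ B then s x else t x := by
  have h : Function.Bijective (fun x => if x ∈ B then s x else t x) := by
    rw [Fintype.bijective_iff_injective_and_card]
    refine ⟨?_, by simp⟩
    intro x y hxy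
    have h1 := hs x
    have h2 := hs y
    have h3 := ht x
    have h4 := ht y
    dsimp only at hxy
    split_ifs at hxy with hx hy hy
    · exact s.injective hxy
    · exact absurd (h4.2 (hxy ▸ (h1.1 hx))) hy
    · exact absurd (h3.2 (hxy ▸ (h2.1 hy))) hx
    · exact t.injective hxy
  rw [bfMix, dif_pos h]; rfl

lemma bfMix_pref_lo {A B : Finset X} {s t : Numbering X} (hs : s.IsPrefix B) (ht : t.IsPrefix B)
    (hA : s.IsPrefix A) (hAB : A ⊆ B) : (bfMix B s t).IsPrefix A := by
  intro x
  rw [bfMix_apply hs ht]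
  split_ifs with hx
  · exact hA x
  · have := (ht x).not.1 hx
    have hc := card_le_card hAB
    constructor
    · intro h; exact absurd (hAB h) hx
    · intro h; omega

lemma bfMix_pref_hi {C B : Finset X} {s t : Numbering X} (hs : s.IsPrefix B) (ht : t.IsPrefix B)
    (hC : t.IsPrefix C) (hBC : B ⊆ C) : (bfMix B s t).IsPrefix C := by
  intro x
  rw [bfMix_apply hs ht]
  split_ifs with hx
  · have := (hs x).1 hx
    have hc := card_le_card hBC
    constructor
    · intro h; omega
    · intro h; exact hBC hx
  · exact hC x

lemma bfMix_mix {B : Finset X} {s t : Numbering X} (hs : s.IsPrefix B) (ht : t.IsPrefix B) :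
    bfMix B (bfMix B s t) (bfMix B t s) = s := by
  ext x
  rw [bfMix_apply (bfMix_pref_lo hs ht hs subset_rfl) (bfMix_pref_lo ht hs ht subset_rfl),
    bfMix_apply hs ht, bfMix_apply ht hs]
  split_ifs <;> rfl

def bfLo (G : Finset (Finset X)) (B : Finset X) (f : Numbering X) : Prop :=
  ∃ A ∈ G, A ⊂ B ∧ f.IsPrefix A
def bfHi (G : Finset (Finset X)) (B : Finset X) (f : Numbering X) : Prop :=
  ∃ A ∈ G, B ⊂ A ∧ f.IsPrefix A

open Classical in
lemma bf_indep (G : Finset (Finset X)) (B : Finset X) :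
    #{f ∈ prefixed B | bfLo G B f ∧ bfHi G B f} * #(prefixed B)
      = #{f ∈ prefixed B | bfLo G B f} * #{f ∈ prefixed B | bfHi G B f} := by
  rw [← card_product, ← card_product]
  apply Finset.card_nbij' (fun p => (bfMix B p.1 p.2, bfMix B p.2 p.1))
    (fun p => (bfMix B p.1 p.2, bfMix B p.2 p.1))
  · rintro ⟨s, t⟩ h
    simp only [coe_product, coe_filter, Set.mem_prod, Set.mem_ofPred_eq, mem_prefixed, mem_coe] at h ⊢
    obtain ⟨⟨hs, ⟨A, hA, hAB, hA'⟩, ⟨C, hC, hBC, hC'⟩⟩, ht⟩ := h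
    exact ⟨⟨bfMix_pref_lo hs ht hs subset_rfl, A, hA, hAB, bfMix_pref_lo hs ht hA' hAB.1⟩,
      ⟨bfMix_pref_lo ht hs ht subset_rfl, C, hC, hBC, bfMix_pref_hi ht hs hC' hBC.1⟩⟩
  · rintro ⟨s, t⟩ h
    simp only [coe_product, coe_filter, Set.mem_prod, Set.mem_ofPred_eq, mem_prefixed, mem_coe] at h ⊢
    obtain ⟨⟨hs, ⟨A, hA, hAB, hA'⟩⟩, ht, ⟨C, hC, hBC, hC'⟩⟩ := h
    exact ⟨⟨bfMix_pref_lo hs ht hs subset_rfl, ⟨A, hA, hAB, bfMix_pref_lo hs ht hA' hAB.1⟩,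
      C, hC, hBC, bfMix_pref_hi hs ht hC' hBC.1⟩, bfMix_pref_lo ht hs ht subset_rfl⟩
  · rintro ⟨s, t⟩ h
    simp only [coe_product, coe_filter, Set.mem_prod, Set.mem_ofPred_eq, mem_prefixed, mem_coe] at h ⊢
    rw [bfMix_mix h.1.1 h.2, bfMix_mix h.2 h.1.1]
  · rintro ⟨s, t⟩ h
    simp only [coe_product, coe_filter, Set.mem_prod, Set.mem_ofPred_eq, mem_prefixed, mem_coe] at h ⊢
    rw [bfMix_mix h.1.1 h.2.1, bfMix_mix h.2.1 h.1.1]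

lemma bf_card_two {A B : Finset X} (hAB : A ⊆ B) :
    #(prefixed A ∩ prefixed B) ≤ (#A).factorial * (#B - #A).factorial * (card X - #B).factorial := by
  classical
  let A' : Finset B := univ.filter (fun x => x.1 ∈ A)
  have hA' : #A' = #A := by
    apply Finset.card_bij (fun x _ => x.1)
    · intro x hx; simpa [A'] using hx
    · intro x _ y _ h; exact Subtype.ext h
    · intro x hx; exact ⟨⟨x, hAB hx⟩, by simpa [A'] using hx, rfl⟩
  have key : #(prefixed A ∩ prefixed B) ≤ #((prefixed A') ×ˢ (univ : Finset (Numbering ↑(Bᶜ)))) := by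
    apply Finset.card_le_card_of_injOn
      (fun f => if h : f ∈ prefixed B then prefixedEquiv B ⟨f, h⟩ else Classical.choice ⟨(Fintype.equivFin _, Fintype.equivFin _)⟩)
    · intro f hf
      have hf' : f ∈ prefixed A ∧ f ∈ prefixed B := by simpa using hf
      simp only [hf'.2, dite_true]
      simp only [coe_product, Set.mem_prod, mem_coe, mem_univ, and_true, mem_prefixed]
      intro x
      have := (mem_prefixed.1 hf'.1) x.1
      rw [hA']
      simpa [A', prefixedEquiv] using this
    · intro f hf g hg h
      have hf' : f ∈ prefixed B := (by simpa using hf : f ∈ prefixed A ∧ f ∈ prefixed B).2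
      have hg' : g ∈ prefixed B := (by simpa using hg : g ∈ prefixed A ∧ g ∈ prefixed B).2
      simp only [hf', hg', dite_true] at h
      simpa using (prefixedEquiv B).injective h
  rw [card_product, card_prefixed, hA'] at key
  simpa [Fintype.card_numbering, card_compl] using key

end BFchain

section BFchain2
open Finset Fintype Numbering

variable {X : Type*} [Fintype X] [DecidableEq X]

lemma bf_pair_lo {A B : Finset X} (hAB : A ⊆ B) :
    #(prefixed A ∩ prefixed B) * (#B).choose #A ≤ #(prefixed B) := by
  have h := bf_card_two hAB
  rw [card_prefixed, ← Nat.choose_mul_factorial_mul_factorial (card_le_card hAB)]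
  calc _ ≤ _ := Nat.mul_le_mul_right _ h
    _ = _ := by ring

lemma bf_pair_hi {A B : Finset X} (hAB : A ⊆ B) :
    #(prefixed A ∩ prefixed B) * (card X - #A).choose (#B - #A) ≤ #(prefixed A) := by
  have h := bf_card_two hAB
  have hc := card_le_card hAB
  have hB := Finset.card_le_univ B
  have e : card X - #A - (#B - #A) = card X - #B := by omega
  rw [card_prefixed, ← Nat.choose_mul_factorial_mul_factorial (n := card X - #A) (k := #B - #A) (by omega), e]
  calc _ ≤ _ := Nat.mul_le_mul_right _ h
    _ = _ := by ring

lemma bf_choose_mono {p r s : ℕ} (h : r ≤ s) (hs : s ≤ p / 2) : p.choose r ≤ p.choose s := by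
  induction s, h using Nat.le_induction with
  | base => rfl
  | succ s h ih => exact (ih (by omega)).trans (Nat.choose_le_succ_of_lt_half_left (by omega))

lemma bf_choose_two {p a : ℕ} (h : 2 ≤ a) (h' : a + 2 ≤ p) : p.choose 2 ≤ p.choose a := by
  rcases le_or_gt a (p / 2) with h1 | h1
  · exact bf_choose_mono h h1
  · rw [← Nat.choose_symm (show a ≤ p by omega)]
    exact bf_choose_mono (by omega) (by omega)

lemma bf_prefixed_pos (B : Finset X) : (0 : ℝ) < #(prefixed B) := by
  rw [card_prefixed]; positivity

open Classical in
noncomputable def bfAl (G : Finset (Finset X)) (B : Finset X) : ℝ :=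
  #{f ∈ prefixed B | bfLo G B f} / #(prefixed B)
open Classical in
noncomputable def bfBe (G : Finset (Finset X)) (B : Finset X) : ℝ :=
  #{f ∈ prefixed B | bfHi G B f} / #(prefixed B)

lemma bfAl_nonneg (G : Finset (Finset X)) (B : Finset X) : 0 ≤ bfAl G B := by unfold bfAl; positivity
lemma bfBe_nonneg (G : Finset (Finset X)) (B : Finset X) : 0 ≤ bfBe G B := by unfold bfBe; positivity
lemma bfAl_le_one (G : Finset (Finset X)) (B : Finset X) : bfAl G B ≤ 1 := by
  classical
  unfold bfAl
  rw [div_le_one (bf_prefixed_pos B)]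
  exact_mod_cast card_le_card (filter_subset _ _)
lemma bfBe_le_one (G : Finset (Finset X)) (B : Finset X) : bfBe G B ≤ 1 := by
  classical
  unfold bfBe
  rw [div_le_one (bf_prefixed_pos B)]
  exact_mod_cast card_le_card (filter_subset _ _)

/-- generic sum bound -/
lemma bf_sum_bound {ι : Type*} (S : Finset ι) (P : ι → Prop) [DecidablePred P] (t : ι → ℝ) (p : ℝ)
    (h1 : ∀ i ∈ S, P i → t i ≤ 1 / p) (h2 : ∀ i ∈ S, ¬ P i → t i ≤ 2 / (p * (p - 1))) :
    ∑ i ∈ S, t i ≤ (#{i ∈ S | P i} : ℝ) / p + ((#S : ℝ) - #{i ∈ S | P i}) * (2 / (p * (p - 1))) := by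
  have e : (#S : ℝ) - #{i ∈ S | P i} = #{i ∈ S | ¬ P i} := by
    rw [← card_filter_add_card_filter_not (s := S) P]; push_cast; ring
  rw [e, ← sum_filter_add_sum_filter_not S P]
  refine add_le_add ?_ ?_
  · refine (sum_le_card_nsmul _ _ (1 / p) ?_).trans_eq ?_
    · intro i hi; rw [mem_filter] at hi; exact h1 i hi.1 hi.2
    · rw [nsmul_eq_mul]; ring
  · refine (sum_le_card_nsmul _ _ (2 / (p * (p - 1))) ?_).trans_eq ?_
    · intro i hi; rw [mem_filter] at hi; exact h2 i hi.1 hi.2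
    · rw [nsmul_eq_mul]

lemma bf_inv_bound1 {x y : ℕ} {K : ℕ} (hK : (0:ℝ) < K) (hy : 0 < y) (h : x * y ≤ K) : (x : ℝ) / K ≤ 1 / y := by
  rw [div_le_div_iff₀ hK (by exact_mod_cast hy)]
  have : (x : ℝ) * y ≤ K := by exact_mod_cast h
  linarith

lemma bf_inv_bound2 {x y : ℕ} {K p : ℕ} (hK : (0:ℝ) < K) (hp : 2 ≤ p) (hy : p.choose 2 ≤ y)
    (h : x * y ≤ K) : (x : ℝ) / K ≤ 2 / (p * (p - 1)) := by
  have h0 : 0 < p.choose 2 := Nat.choose_pos hp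
  refine (bf_inv_bound1 hK h0 ((Nat.mul_le_mul_left _ hy).trans h)).trans_eq ?_
  rw [Nat.cast_choose_two, one_div_div]

lemma bfAl_le {F G : Finset (Finset X)} (hGF : G ⊆ F) (B : Finset X) (hG : ∀ A ∈ G, 2 ≤ #A) (hB : 2 ≤ #B) :
    bfAl G B ≤ (#{A ∈ F | A ⊂ B ∧ #A + 1 = #B} : ℝ) / #B +
      ((#{A ∈ F | A ⊂ B} : ℝ) - #{A ∈ F | A ⊂ B ∧ #A + 1 = #B}) * (2 / (#B * (#B - 1))) := by
  classical
  have hK := bf_prefixed_pos B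
  have s1 : bfAl G B ≤ ∑ A ∈ {A ∈ G | A ⊂ B}, (#(prefixed A ∩ prefixed B) : ℝ) / #(prefixed B) := by
    unfold bfAl
    rw [← sum_div]
    gcongr
    norm_cast
    refine (card_le_card ?_).trans card_biUnion_le
    intro f hf
    rw [mem_filter, mem_prefixed] at hf
    simp only [mem_filter, mem_biUnion, mem_inter, mem_prefixed]
    obtain ⟨h1, A, hA, h2, h3⟩ := hf
    exact ⟨A, ⟨hA, h2⟩, h3, h1⟩
  have s2 := bf_sum_bound {A ∈ G | A ⊂ B} (fun A => #A + 1 = #B)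
    (fun A => (#(prefixed A ∩ prefixed B) : ℝ) / #(prefixed B)) #B ?_ ?_
  · refine s1.trans (s2.trans ?_)
    rw [filter_filter]
    set d1' := #{A ∈ G | A ⊂ B ∧ #A + 1 = #B} with hd1'
    set d1 := #{A ∈ F | A ⊂ B ∧ #A + 1 = #B} with hd1
    have a1 : (d1' : ℝ) ≤ d1 := by
      norm_cast; exact card_le_card (filter_subset_filter _ hGF)
    have e1 : ∀ H : Finset (Finset X), (#{A ∈ H | A ⊂ B} : ℝ) - #{A ∈ H | A ⊂ B ∧ #A + 1 = #B}
        = #{A ∈ H | A ⊂ B ∧ ¬ #A + 1 = #B} := by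
      intro H
      rw [← filter_filter, ← filter_filter, ← card_filter_add_card_filter_not (s := {A ∈ H | A ⊂ B}) (fun A => #A + 1 = #B)]
      push_cast; ring
    rw [e1 G, e1 F]
    have a2 : (#{A ∈ G | A ⊂ B ∧ ¬ #A + 1 = #B} : ℝ) ≤ #{A ∈ F | A ⊂ B ∧ ¬ #A + 1 = #B} := by
      norm_cast; exact card_le_card (filter_subset_filter _ hGF)
    have : (2:ℝ) ≤ #B := by exact_mod_cast hB
    have a3 : (0:ℝ) ≤ 2 / (#B * (#B - 1)) := by
      apply div_nonneg; norm_num; apply mul_nonneg <;> linarith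
    gcongr
  · intro A hA hc
    rw [mem_filter] at hA
    apply bf_inv_bound1 hK (by omega)
    have := bf_pair_lo hA.2.1
    rwa [← hc, Nat.choose_succ_self_right, hc] at this
  · intro A hA hc
    rw [mem_filter] at hA
    have := card_lt_card hA.2
    exact bf_inv_bound2 hK hB (bf_choose_two (hG A hA.1) (by omega)) (bf_pair_lo hA.2.1)

lemma bfBe_le {F G : Finset (Finset X)} (hGF : G ⊆ F) (B : Finset X) (hG : ∀ A ∈ G, 2 + #A ≤ card X) (hB : 2 + #B ≤ card X) :
    bfBe G B ≤ (#{A ∈ F | B ⊂ A ∧ #B + 1 = #A} : ℝ) / (card X - #B : ℕ) +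
      ((#{A ∈ F | B ⊂ A} : ℝ) - #{A ∈ F | B ⊂ A ∧ #B + 1 = #A}) * (2 / ((card X - #B : ℕ) * ((card X - #B : ℕ) - 1))) := by
  classical
  have hK := bf_prefixed_pos B
  have s1 : bfBe G B ≤ ∑ A ∈ {A ∈ G | B ⊂ A}, (#(prefixed B ∩ prefixed A) : ℝ) / #(prefixed B) := by
    unfold bfBe
    rw [← sum_div]
    gcongr
    norm_cast
    refine (card_le_card ?_).trans card_biUnion_le
    intro f hf
    rw [mem_filter, mem_prefixed] at hf
    simp only [mem_filter, mem_biUnion, mem_inter, mem_prefixed]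
    obtain ⟨h1, A, hA, h2, h3⟩ := hf
    exact ⟨A, ⟨hA, h2⟩, h1, h3⟩
  have s2 := bf_sum_bound {A ∈ G | B ⊂ A} (fun A => #B + 1 = #A)
    (fun A => (#(prefixed B ∩ prefixed A) : ℝ) / #(prefixed B)) ((card X - #B : ℕ) : ℝ) ?_ ?_
  · refine s1.trans (s2.trans ?_)
    rw [filter_filter]
    set d1' := #{A ∈ G | B ⊂ A ∧ #B + 1 = #A} with hd1'
    set d1 := #{A ∈ F | B ⊂ A ∧ #B + 1 = #A} with hd1
    have a1 : (d1' : ℝ) ≤ d1 := by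
      norm_cast; exact card_le_card (filter_subset_filter _ hGF)
    have e1 : ∀ H : Finset (Finset X), (#{A ∈ H | B ⊂ A} : ℝ) - #{A ∈ H | B ⊂ A ∧ #B + 1 = #A}
        = #{A ∈ H | B ⊂ A ∧ ¬ #B + 1 = #A} := by
      intro H
      rw [← filter_filter, ← filter_filter, ← card_filter_add_card_filter_not (s := {A ∈ H | B ⊂ A}) (fun A => #B + 1 = #A)]
      push_cast; ring
    rw [e1 G, e1 F]
    have a2 : (#{A ∈ G | B ⊂ A ∧ ¬ #B + 1 = #A} : ℝ) ≤ #{A ∈ F | B ⊂ A ∧ ¬ #B + 1 = #A} := by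
      norm_cast; exact card_le_card (filter_subset_filter _ hGF)
    have : (2:ℝ) ≤ (card X - #B : ℕ) := by norm_cast; omega
    have a3 : (0:ℝ) ≤ 2 / ((card X - #B : ℕ) * ((card X - #B : ℕ) - 1)) := by
      apply div_nonneg; norm_num; apply mul_nonneg <;> linarith
    gcongr
  · intro A hA hc
    rw [mem_filter] at hA
    apply bf_inv_bound1 hK (by omega)
    have := bf_pair_hi hA.2.1
    rwa [← hc, Nat.add_sub_cancel_left, Nat.choose_one_right] at this
  · intro A hA hc
    rw [mem_filter] at hA
    have := card_lt_card hA.2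
    have h3 := hG A hA.1
    exact bf_inv_bound2 hK (by omega) (bf_choose_two (a := #A - #B) (by omega) (by omega)) (bf_pair_hi hA.2.1)

end BFchain2

section BFchain3
open Finset Fintype Numbering

variable {X : Type*} [Fintype X] [DecidableEq X]

open Classical in
noncomputable def bfInd (P : Prop) : ℝ := if P then 1 else 0

lemma bfInd_true {P : Prop} (h : P) : bfInd P = 1 := by simp [bfInd, h]
lemma bfInd_false {P : Prop} (h : ¬ P) : bfInd P = 0 := by simp [bfInd, h]
lemma bfInd_nonneg (P : Prop) : 0 ≤ bfInd P := by unfold bfInd; split_ifs <;> norm_num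
lemma bfInd_le_one (P : Prop) : bfInd P ≤ 1 := by unfold bfInd; split_ifs <;> norm_num

/-- pointwise contribution -/
noncomputable def bfTerm (c : ℝ) (lam : Finset X → ℝ) (G : Finset (Finset X)) (flo fhi : Finset X → Prop)
    (f : Numbering X) (B : Finset X) : ℝ :=
  lam B * (bfInd (bfLo G B f) * bfInd (bfHi G B f))
   - (1 - 2 * c) * ((1 - bfInd (bfLo G B f)) * (1 - bfInd (bfHi G B f)))
   + 2 * c * lam B * bfInd (flo B) * ((1 - bfInd (bfLo G B f)) * bfInd (bfHi G B f))
   + 2 * c * lam B * bfInd (fhi B) * (bfInd (bfLo G B f) * (1 - bfInd (bfHi G B f)))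

lemma bf_ssubset_of {f : Numbering X} {A B : Finset X} (hA : f.IsPrefix A) (hB : f.IsPrefix B) (h : #A < #B) :
    A ⊂ B := by
  refine ⟨hA.subset_of_card_le_card hB h.le, fun h' => ?_⟩
  have := card_le_card h'
  omega

lemma bf_eq_of {f : Numbering X} {A B : Finset X} (hA : f.IsPrefix A) (hB : f.IsPrefix B) (h : #A = #B) :
    A = B :=
  Finset.Subset.antisymm (hA.subset_of_card_le_card hB h.le) (hB.subset_of_card_le_card hA h.ge)

lemma bf_far_aux {l s c : ℝ} {P : Prop} (hl0 : 0 ≤ l) (hl1 : l ≤ 1) (hc0 : 0 ≤ c) (hc : c ≤ 1/2) (hs : s ≤ c)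
    (h0 : ¬ P → s = 0) : l - 1 + s ≤ 2 * c * l * bfInd P := by
  by_cases hP : P
  · rw [bfInd_true hP]
    by_cases h : l ≤ 1/2
    · nlinarith
    · nlinarith
  · rw [bfInd_false hP, h0 hP]; linarith

lemma bf_pointwise (F : Finset (Finset X)) (L H : ℕ) (lam : Finset X → ℝ) (c : ℝ)
    (hl0 : ∀ B, 0 ≤ lam B) (hl1 : ∀ B, lam B ≤ 1) (hc0 : 0 ≤ c) (hc : c ≤ 1/2) (f : Numbering X)
    (hlow : ∑ B ∈ F with f.IsPrefix B ∧ #B < L, lam B ≤ c)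
    (hhigh : ∑ B ∈ F with f.IsPrefix B ∧ H < #B, lam B ≤ c) :
    ∑ B ∈ F with f.IsPrefix B, lam B - 2 ≤
      ∑ B ∈ F with f.IsPrefix B ∧ L ≤ #B ∧ #B ≤ H,
        bfTerm c lam {B ∈ F | L ≤ #B ∧ #B ≤ H} (fun B => ∃ A ∈ F, #A < L ∧ A ⊂ B)
          (fun B => ∃ A ∈ F, H < #A ∧ B ⊂ A) f B := by
  classical
  set flo : Finset X → Prop := fun B => ∃ A ∈ F, #A < L ∧ A ⊂ B with hflo
  set fhi : Finset X → Prop := fun B => ∃ A ∈ F, H < #A ∧ B ⊂ A with hfhi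
  set G : Finset (Finset X) := {B ∈ F | L ≤ #B ∧ #B ≤ H} with hG
  set N : Finset (Finset X) := {B ∈ F | f.IsPrefix B ∧ L ≤ #B ∧ #B ≤ H} with hN
  have memN : ∀ B, B ∈ N ↔ B ∈ F ∧ f.IsPrefix B ∧ L ≤ #B ∧ #B ≤ H := by simp [hN]
  have split : ∑ B ∈ F with f.IsPrefix B, lam B ≤ ∑ B ∈ N, lam B +
      ∑ B ∈ F with f.IsPrefix B ∧ #B < L, lam B + ∑ B ∈ F with f.IsPrefix B ∧ H < #B, lam B := by
    have : ({B ∈ F | f.IsPrefix B} : Finset (Finset X)) ⊆ (N ∪ {B ∈ F | f.IsPrefix B ∧ #B < L}) ∪ {B ∈ F | f.IsPrefix B ∧ H < #B} := by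
      intro B hB
      simp only [mem_filter, mem_union, memN] at hB ⊢
      rcases lt_or_ge (#B) L with h | h
      · tauto
      · rcases lt_or_ge H (#B) with h' | h' <;> tauto
    refine (sum_le_sum_of_subset_of_nonneg this (fun i _ _ => hl0 i)).trans ?_
    have un : ∀ S T : Finset (Finset X), ∑ B ∈ S ∪ T, lam B ≤ ∑ B ∈ S, lam B + ∑ B ∈ T, lam B := by
      intro S T
      rw [← sum_union_inter]
      linarith [sum_nonneg (s := S ∩ T) (fun i _ => hl0 i)]
    linarith [un (N ∪ {B ∈ F | f.IsPrefix B ∧ #B < L}) {B ∈ F | f.IsPrefix B ∧ H < #B}, un N {B ∈ F | f.IsPrefix B ∧ #B < L}]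
  set sl := ∑ B ∈ F with f.IsPrefix B ∧ #B < L, lam B
  set sh := ∑ B ∈ F with f.IsPrefix B ∧ H < #B, lam B
  have lo_iff : ∀ B ∈ N, bfLo G B f ↔ ∃ A ∈ N, #A < #B := by
    intro B hB
    have hB' := (memN B).1 hB
    constructor
    · rintro ⟨A, hA, h1, h2⟩
      exact ⟨A, (memN A).2 ⟨(mem_filter.1 hA).1, h2, (mem_filter.1 hA).2⟩, card_lt_card h1⟩
    · rintro ⟨A, hA, h1⟩
      have hA' := (memN A).1 hA
      exact ⟨A, mem_filter.2 ⟨hA'.1, hA'.2.2⟩, bf_ssubset_of hA'.2.1 hB'.2.1 h1, hA'.2.1⟩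
  have hi_iff : ∀ B ∈ N, bfHi G B f ↔ ∃ A ∈ N, #B < #A := by
    intro B hB
    have hB' := (memN B).1 hB
    constructor
    · rintro ⟨A, hA, h1, h2⟩
      exact ⟨A, (memN A).2 ⟨(mem_filter.1 hA).1, h2, (mem_filter.1 hA).2⟩, card_lt_card h1⟩
    · rintro ⟨A, hA, h1⟩
      have hA' := (memN A).1 hA
      exact ⟨A, mem_filter.2 ⟨hA'.1, hA'.2.2⟩, bf_ssubset_of hB'.2.1 hA'.2.1 h1, hA'.2.1⟩
  rcases N.eq_empty_or_nonempty with hE | hne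
  · rw [hE] at split ⊢
    simp only [Finset.sum_empty] at split ⊢
    linarith
  obtain ⟨B0, hB0, hmin⟩ := N.exists_min_image (fun B => #B) hne
  obtain ⟨B1, hB1, hmax⟩ := N.exists_max_image (fun B => #B) hne
  have hB0' := (memN B0).1 hB0
  have hB1' := (memN B1).1 hB1
  have nlo : ¬ bfLo G B0 f := by
    rw [lo_iff B0 hB0]; rintro ⟨A, hA, h⟩; have := hmin A hA; omega
  have nhi : ¬ bfHi G B1 f := by
    rw [hi_iff B1 hB1]; rintro ⟨A, hA, h⟩; have := hmax A hA; omega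
  by_cases heq : #B0 = #B1
  · have e01 : B0 = B1 := bf_eq_of hB0'.2.1 hB1'.2.1 heq
    have hN1 : N = {B0} := by
      rw [eq_singleton_iff_unique_mem]
      refine ⟨hB0, fun A hA => bf_eq_of ((memN A).1 hA).2.1 hB0'.2.1 ?_⟩
      have := hmin A hA
      have := hmax A hA
      omega
    rw [hN1] at split ⊢
    simp only [sum_singleton] at split ⊢
    rw [bfTerm, bfInd_false nlo, bfInd_false (by rw [e01]; exact nhi)]
    have := hl1 B0
    linarith
  · have hlt : #B0 < #B1 := lt_of_le_of_ne (hmin B1 hB1) heq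
    have hne01 : B0 ≠ B1 := fun h => heq (by rw [h])
    have hi0 : bfHi G B0 f := (hi_iff B0 hB0).2 ⟨B1, hB1, hlt⟩
    have lo1 : bfLo G B1 f := (lo_iff B1 hB1).2 ⟨B0, hB0, hlt⟩
    have hB1e : B1 ∈ N.erase B0 := mem_erase.2 ⟨hne01.symm, hB1⟩
    rw [← add_sum_erase N _ hB0, ← add_sum_erase (N.erase B0) _ hB1e] at split
    rw [← add_sum_erase N _ hB0, ← add_sum_erase (N.erase B0) _ hB1e]
    have rest : ∑ B ∈ (N.erase B0).erase B1, lam B ≤ ∑ B ∈ (N.erase B0).erase B1, bfTerm c lam G flo fhi f B := by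
      apply sum_le_sum
      intro B hB
      obtain ⟨h1, h2, hBN⟩ : B ≠ B1 ∧ B ≠ B0 ∧ B ∈ N := by simpa using hB
      have hB' := (memN B).1 hBN
      have l : bfLo G B f := (lo_iff B hBN).2 ⟨B0, hB0, lt_of_le_of_ne (hmin B hBN)
        (fun h => h2 (bf_eq_of hB'.2.1 hB0'.2.1 h.symm))⟩
      have h : bfHi G B f := (hi_iff B hBN).2 ⟨B1, hB1, lt_of_le_of_ne (hmax B hBN)
        (fun h => h1 (bf_eq_of hB'.2.1 hB1'.2.1 h))⟩
      rw [bfTerm, bfInd_true l, bfInd_true h]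
      apply le_of_eq; ring
    have t0 : lam B0 - 1 + sl ≤ bfTerm c lam G flo fhi f B0 := by
      rw [bfTerm, bfInd_false nlo, bfInd_true hi0]
      have := bf_far_aux (P := flo B0) (hl0 B0) (hl1 B0) hc0 hc hlow (by
        intro h
        apply Finset.sum_eq_zero
        intro A hA
        exfalso
        simp only [mem_filter] at hA
        exact h ⟨A, hA.1, hA.2.2, bf_ssubset_of hA.2.1 hB0'.2.1 (by omega)⟩)
      linarith
    have t1 : lam B1 - 1 + sh ≤ bfTerm c lam G flo fhi f B1 := by
      rw [bfTerm, bfInd_false nhi, bfInd_true lo1]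
      have := bf_far_aux (P := fhi B1) (hl0 B1) (hl1 B1) hc0 hc hhigh (by
        intro h
        apply Finset.sum_eq_zero
        intro A hA
        exfalso
        simp only [mem_filter] at hA
        exact h ⟨A, hA.1, hA.2.2, bf_ssubset_of hB1'.2.1 hA.2.1 (by omega)⟩)
      linarith
    linarith

lemma bf_sum_term (c : ℝ) (lam : Finset X → ℝ) (G : Finset (Finset X)) (flo fhi : Finset X → Prop)
    (B : Finset X) : ∑ f ∈ prefixed B, bfTerm c lam G flo fhi f B =
     #(prefixed B) * (lam B * (bfAl G B * bfBe G B) - (1 - 2 * c) * ((1 - bfAl G B) * (1 - bfBe G B))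
      + 2 * c * lam B * bfInd (flo B) * ((1 - bfAl G B) * bfBe G B)
      + 2 * c * lam B * bfInd (fhi B) * (bfAl G B * (1 - bfBe G B))) := by
  classical
  have hK := bf_prefixed_pos B
  set K : ℝ := ((#(prefixed B) : ℕ) : ℝ) with hKdef
  have e1 : ∑ f ∈ prefixed B, bfInd (bfLo G B f) = K * bfAl G B := by
    rw [bfAl, mul_div_cancel₀ _ hK.ne']
    simp [bfInd]
  have e2 : ∑ f ∈ prefixed B, bfInd (bfHi G B f) = K * bfBe G B := by
    rw [bfBe, mul_div_cancel₀ _ hK.ne']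
    simp [bfInd]
  have e3 : ∑ f ∈ prefixed B, bfInd (bfLo G B f) * bfInd (bfHi G B f) = K * (bfAl G B * bfBe G B) := by
    have h : ∑ f ∈ prefixed B, bfInd (bfLo G B f) * bfInd (bfHi G B f) = #{f ∈ prefixed B | bfLo G B f ∧ bfHi G B f} := by
      rw [card_filter]; push_cast
      apply Finset.sum_congr rfl
      intro f _
      unfold bfInd
      by_cases h1 : bfLo G B f <;> by_cases h2 : bfHi G B f <;> simp [h1, h2]
    have h' : (#{f ∈ prefixed B | bfLo G B f ∧ bfHi G B f} : ℝ) * K = #{f ∈ prefixed B | bfLo G B f} * #{f ∈ prefixed B | bfHi G B f} := by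
      rw [hKdef]; exact_mod_cast bf_indep G B
    rw [h, bfAl, bfBe, ← hKdef]
    field_simp
    linarith
  have e0 : ∑ f ∈ prefixed B, (1:ℝ) = K := by simp [hKdef]
  have : ∀ f, bfTerm c lam G flo fhi f B =
    (lam B - (1 - 2 * c) - 2 * c * lam B * bfInd (flo B) - 2 * c * lam B * bfInd (fhi B)) * (bfInd (bfLo G B f) * bfInd (bfHi G B f))
    + ((1 - 2 * c) + 2 * c * lam B * bfInd (fhi B)) * bfInd (bfLo G B f)
    + ((1 - 2 * c) + 2 * c * lam B * bfInd (flo B)) * bfInd (bfHi G B f)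
    - (1 - 2 * c) * 1 := by intro f; unfold bfTerm; ring
  simp only [this]
  rw [sum_sub_distrib, sum_add_distrib, sum_add_distrib, ← mul_sum, ← mul_sum, ← mul_sum, ← mul_sum, e0, e1, e2, e3]
  ring

lemma bf_expect (F : Finset (Finset X)) (L H : ℕ) (lam : Finset X → ℝ) (c : ℝ)
    (hl0 : ∀ B, 0 ≤ lam B) (hl1 : ∀ B, lam B ≤ 1) (hc0 : 0 ≤ c) (hc : c ≤ 1/2)
    (hlow : ∀ f : Numbering X, ∑ B ∈ F with f.IsPrefix B ∧ #B < L, lam B ≤ c)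
    (hhigh : ∀ f : Numbering X, ∑ B ∈ F with f.IsPrefix B ∧ H < #B, lam B ≤ c)
    (G : Finset (Finset X)) (hG : G = {B ∈ F | L ≤ #B ∧ #B ≤ H}) :
    ∑ B ∈ F, lam B * #(prefixed B) - 2 * (card X).factorial ≤
      ∑ B ∈ G, #(prefixed B) * (lam B * (bfAl G B * bfBe G B) - (1 - 2 * c) * ((1 - bfAl G B) * (1 - bfBe G B))
      + 2 * c * lam B * bfInd (∃ A ∈ F, #A < L ∧ A ⊂ B) * ((1 - bfAl G B) * bfBe G B)
      + 2 * c * lam B * bfInd (∃ A ∈ F, H < #A ∧ B ⊂ A) * (bfAl G B * (1 - bfBe G B))) := by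
  classical
  have h := sum_le_sum (fun f (_ : f ∈ (univ : Finset (Numbering X))) =>
    bf_pointwise F L H lam c hl0 hl1 hc0 hc f (hlow f) (hhigh f))
  rw [← hG] at h
  have swap : ∀ (S : Finset (Finset X)) (g : Numbering X → Finset X → ℝ),
      ∑ f : Numbering X, ∑ B ∈ S with f.IsPrefix B, g f B = ∑ B ∈ S, ∑ f ∈ prefixed B, g f B := by
    intro S g
    simp only [sum_filter, prefixed]
    rw [sum_comm]
  have e1 : ∑ f : Numbering X, (∑ B ∈ F with f.IsPrefix B, lam B - 2) = ∑ B ∈ F, lam B * #(prefixed B) - 2 * (card X).factorial := by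
    rw [sum_sub_distrib, swap F (fun _ B => lam B)]
    congr 1
    · apply Finset.sum_congr rfl; intro B _; rw [sum_const, nsmul_eq_mul]; ring
    · rw [sum_const, card_univ, Fintype.card_numbering, nsmul_eq_mul]; ring
  rw [e1] at h
  refine h.trans (le_of_eq ?_)
  have e2 : ∀ f : Numbering X, ({B ∈ F | f.IsPrefix B ∧ L ≤ #B ∧ #B ≤ H} : Finset (Finset X)) = {B ∈ G | f.IsPrefix B} := by
    intro f; rw [hG]; ext B; simp only [mem_filter]; tauto
  simp only [e2]
  rw [swap G]
  apply Finset.sum_congr rfl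
  intro B _
  exact bf_sum_term c lam G _ _ B

end BFchain3

section BFcount
open Finset

variable {n : ℕ}

def bfP (i j : ℕ) (B : Finset (Fin n)) (S : Finset (Finset (Fin n))) : Prop :=
  B ∈ S ∧ #{x ∈ S | x ⊂ B} = i ∧ #{x ∈ S | B ⊂ x} = j ∧ #S = i + j + 1

lemma bfP_comp {i j : ℕ} {B : Finset (Fin n)} {S : Finset (Finset (Fin n))} (h : bfP i j B S)
    {x : Finset (Fin n)} (hx : x ∈ S) (hne : x ≠ B) : x ⊂ B ∨ B ⊂ x := by
  obtain ⟨hB, h1, h2, h3⟩ := h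
  have hd : Disjoint {x ∈ S | x ⊂ B} {x ∈ S | B ⊂ x} := by
    rw [disjoint_left]
    intro y hy hy'
    exact (mem_filter.1 hy).2.2 (mem_filter.1 hy').2.1
  have hs : {x ∈ S | x ⊂ B} ∪ {x ∈ S | B ⊂ x} ⊆ S.erase B := by
    intro y hy
    rw [mem_union, mem_filter, mem_filter] at hy
    rw [mem_erase]
    rcases hy with hy | hy
    · exact ⟨hy.2.ne, hy.1⟩
    · exact ⟨hy.2.ne', hy.1⟩
  have he := eq_of_subset_of_card_le hs (by rw [card_union_of_disjoint hd, card_erase_of_mem hB]; omega)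
  have : x ∈ S.erase B := mem_erase.2 ⟨hne, hx⟩
  rw [← he, mem_union, mem_filter, mem_filter] at this
  tauto

lemma bfP_aux {i j i' j' : ℕ} {B B' : Finset (Fin n)} {S : Finset (Finset (Fin n))} (h : bfP i j B S)
    (h' : bfP i' j' B' S) (hs : B ⊂ B') : i < i' ∧ j' < j := by
  constructor
  · rw [← h.2.1, ← h'.2.1]
    apply card_lt_card
    refine ⟨fun x hx => ?_, fun hc => ?_⟩
    · rw [mem_filter] at hx ⊢; exact ⟨hx.1, hx.2.trans hs⟩
    · have := hc (mem_filter.2 ⟨h.1, hs⟩)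
      exact (mem_filter.1 this).2.ne rfl
  · rw [← h.2.2.1, ← h'.2.2.1]
    apply card_lt_card
    refine ⟨fun x hx => ?_, fun hc => ?_⟩
    · rw [mem_filter] at hx ⊢; exact ⟨hx.1, hs.trans hx.2⟩
    · have := hc (mem_filter.2 ⟨h'.1, hs⟩)
      exact (mem_filter.1 this).2.ne rfl

lemma bfP_unique {i j : ℕ} {B B' : Finset (Fin n)} {S : Finset (Finset (Fin n))} (h : bfP i j B S)
    (h' : bfP i j B' S) : B = B' := by
  by_contra hne
  rcases bfP_comp h' h.1 hne with hs | hs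
  · have := (bfP_aux h h' hs).1; omega
  · have := (bfP_aux h' h hs).1; omega

lemma bfP_cross {B B' : Finset (Fin n)} {S : Finset (Finset (Fin n))} (h : bfP 1 2 B S)
    (ha : ∀ x ∈ S, B ⊂ x → #B + 1 = #x) (h' : bfP 2 1 B' S) : False := by
  have hne : B ≠ B' := by
    rintro rfl
    have := h.2.1; have := h'.2.1; omega
  rcases bfP_comp h' h.1 hne with hs | hs
  · have h1 : 0 < #{x ∈ S | B' ⊂ x} := by rw [h'.2.2.1]; norm_num
    obtain ⟨y, hy⟩ := card_pos.1 h1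
    rw [mem_filter] at hy
    have e1 := ha y hy.1 (hs.trans hy.2)
    have e2 := ha B' h'.1 hs
    have := card_lt_card hy.2
    omega
  · have := (bfP_aux h' h hs).1; omega

lemma bfP_filter {i j : ℕ} {B : Finset (Fin n)} {D U P Q : Finset (Finset (Fin n))}
    (hD : ∀ A ∈ D, A ⊂ B) (hU : ∀ A ∈ U, B ⊂ A) (hP : P ⊆ D) (hQ : Q ⊆ U) :
    {x ∈ insert B (P ∪ Q) | x ⊂ B} = P ∧ {x ∈ insert B (P ∪ Q) | B ⊂ x} = Q := by
  constructor
  · ext x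
    simp only [mem_filter, mem_insert, mem_union]
    constructor
    · rintro ⟨rfl | h | h, hx⟩
      · exact absurd rfl hx.ne
      · exact h
      · exact absurd (hU x (hQ h)).1 hx.2
    · intro h; exact ⟨Or.inr (Or.inl h), hD x (hP h)⟩
  · ext x
    simp only [mem_filter, mem_insert, mem_union]
    constructor
    · rintro ⟨rfl | h | h, hx⟩
      · exact absurd rfl hx.ne
      · exact absurd (hD x (hP h)).1 hx.2
      · exact h
    · intro h; exact ⟨Or.inr (Or.inr h), hU x (hQ h)⟩

open Classical in
lemma bfP_count (i j : ℕ) {F : Finset (Finset (Fin n))} {B : Finset (Fin n)} (hB : B ∈ F) {D U : Finset (Finset (Fin n))}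
    (hDF : D ⊆ F) (hUF : U ⊆ F) (hD : ∀ A ∈ D, A ⊂ B) (hU : ∀ A ∈ U, B ⊂ A) :
    (#D).choose i * (#U).choose j ≤ #{S ∈ F.powerset | bfP i j B S ∧ ∀ x ∈ S, B ⊂ x → x ∈ U} := by
  rw [← card_powersetCard, ← card_powersetCard, ← card_product]
  apply card_le_card_of_injOn (fun p => insert B (p.1 ∪ p.2))
  · rintro ⟨P, Q⟩ hp
    simp only [coe_product, Set.mem_prod, mem_coe, mem_powersetCard] at hp
    obtain ⟨⟨hP, hPi⟩, hQ, hQj⟩ := hp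
    obtain ⟨f1, f2⟩ := bfP_filter (i := i) (j := j) hD hU hP hQ
    simp only [mem_coe, mem_filter, mem_powerset]
    refine ⟨?_, ⟨mem_insert_self _ _, by rw [f1, hPi], by rw [f2, hQj], ?_⟩, ?_⟩
    · rw [insert_subset_iff]
      exact ⟨hB, union_subset (hP.trans hDF) (hQ.trans hUF)⟩
    · have hd : Disjoint P Q := by
        rw [disjoint_left]
        intro x h1 h2
        exact (hD x (hP h1)).2 (hU x (hQ h2)).1
      rw [card_insert_of_notMem, card_union_of_disjoint hd, hPi, hQj]
      intro h
      rcases mem_union.1 h with h | h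
      · exact (hD _ (hP h)).ne rfl
      · exact (hU _ (hQ h)).ne rfl
    · intro x hx hBx
      have : x ∈ {x ∈ insert B (P ∪ Q) | B ⊂ x} := mem_filter.2 ⟨hx, hBx⟩
      rw [f2] at this
      exact hQ this
  · rintro ⟨P, Q⟩ hp ⟨P', Q'⟩ hp' he
    simp only [coe_product, Set.mem_prod, mem_coe, mem_powersetCard] at hp hp'
    obtain ⟨f1, f2⟩ := bfP_filter (i := i) (j := j) hD hU hp.1.1 hp.2.1
    obtain ⟨f1', f2'⟩ := bfP_filter (i := i) (j := j) hD hU hp'.1.1 hp'.2.1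
    dsimp only at he
    rw [he] at f1 f2
    rw [← f1, ← f2, f1', f2']

lemma bfP_butterfly12 {B : Finset (Fin n)} {S : Finset (Finset (Fin n))} (h : bfP 1 2 B S) : IsButterfly S := by
  obtain ⟨A, hA⟩ := card_eq_one.1 h.2.1
  obtain ⟨C, D, hCD, hU⟩ := card_eq_two.1 h.2.2.1
  have a : A ∈ S ∧ A ⊂ B := mem_filter.1 (hA ▸ mem_singleton_self A)
  have c : C ∈ S ∧ B ⊂ C := mem_filter.1 (by rw [hU]; simp : C ∈ {x ∈ S | B ⊂ x})
  have d : D ∈ S ∧ B ⊂ D := mem_filter.1 (by rw [hU]; simp : D ∈ {x ∈ S | B ⊂ x})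
  refine ⟨A, B, C, D, ?_, a.2.ne, hCD, a.2.trans c.2, a.2.trans d.2, c.2, d.2⟩
  ext x
  simp only [mem_insert, mem_singleton]
  constructor
  · intro hx
    by_cases hB : x = B
    · tauto
    · rcases bfP_comp h hx hB with h1 | h1
      · have : x ∈ {x ∈ S | x ⊂ B} := mem_filter.2 ⟨hx, h1⟩
        rw [hA, mem_singleton] at this; tauto
      · have : x ∈ {x ∈ S | B ⊂ x} := mem_filter.2 ⟨hx, h1⟩
        rw [hU, mem_insert, mem_singleton] at this; tauto
  · rintro (rfl | rfl | rfl | rfl)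
    exacts [a.1, h.1, c.1, d.1]

lemma bfP_butterfly21 {B : Finset (Fin n)} {S : Finset (Finset (Fin n))} (h : bfP 2 1 B S) : IsButterfly S := by
  obtain ⟨A, hA⟩ := card_eq_one.1 h.2.2.1
  obtain ⟨C, D, hCD, hU⟩ := card_eq_two.1 h.2.1
  have a : A ∈ S ∧ B ⊂ A := mem_filter.1 (hA ▸ mem_singleton_self A)
  have c : C ∈ S ∧ C ⊂ B := mem_filter.1 (by rw [hU]; simp : C ∈ {x ∈ S | x ⊂ B})
  have d : D ∈ S ∧ D ⊂ B := mem_filter.1 (by rw [hU]; simp : D ∈ {x ∈ S | x ⊂ B})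
  refine ⟨C, D, A, B, ?_, hCD, a.2.ne', c.2.trans a.2, c.2, d.2.trans a.2, d.2⟩
  ext x
  simp only [mem_insert, mem_singleton]
  constructor
  · intro hx
    by_cases hB : x = B
    · tauto
    · rcases bfP_comp h hx hB with h1 | h1
      · have : x ∈ {x ∈ S | x ⊂ B} := mem_filter.2 ⟨hx, h1⟩
        rw [hU, mem_insert, mem_singleton] at this; tauto
      · have : x ∈ {x ∈ S | B ⊂ x} := mem_filter.2 ⟨hx, h1⟩
        rw [hA, mem_singleton] at this; tauto
  · rintro (rfl | rfl | rfl | rfl)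
    exacts [c.1, d.1, a.1, h.1]

open Classical in
lemma bf_sum_unique (F : Finset (Finset (Fin n))) (G : Finset (Finset (Fin n))) (P : Finset (Fin n) → Finset (Finset (Fin n)) → Prop)
    (hP : ∀ B S, P B S → IsButterfly S) (hu : ∀ B B' S, P B S → P B' S → B = B') :
    ∑ B ∈ G, #{S ∈ F.powerset | P B S} ≤ numButterflies F := by
  rw [← card_biUnion]
  · apply card_le_card
    intro S hS
    simp only [mem_biUnion, mem_filter] at hS ⊢
    obtain ⟨B, _, h1, h2⟩ := hS
    exact ⟨h1, hP B S h2⟩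
  · intro B _ B' _ hne
    rw [Function.onFun, disjoint_left]
    intro S h1 h2
    exact hne (hu B B' S (mem_filter.1 h1).2 (mem_filter.1 h2).2)

lemma bf_count_S1 {F G : Finset (Finset (Fin n))} (hG : G ⊆ F) :
    ∑ B ∈ G, #{A ∈ F | A ⊂ B} * (#{A ∈ F | B ⊂ A}).choose 2 ≤ numButterflies F := by
  classical
  refine le_trans (sum_le_sum ?_) (bf_sum_unique F G (bfP 1 2) (fun B S h => bfP_butterfly12 h) (fun B B' S h h' => bfP_unique h h'))
  intro B hB
  have := bfP_count 1 2 (hG hB) (filter_subset (fun A => A ⊂ B) F) (filter_subset (fun A => B ⊂ A) F)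
    (fun A hA => (mem_filter.1 hA).2) (fun A hA => (mem_filter.1 hA).2)
  rw [Nat.choose_one_right] at this
  refine this.trans (card_le_card ?_)
  intro S hS
  rw [mem_filter] at hS ⊢
  exact ⟨hS.1, hS.2.1⟩

lemma bf_count_R {F G : Finset (Finset (Fin n))} (hG : G ⊆ F) :
    ∑ B ∈ G, (#{A ∈ F | A ⊂ B} * (#{A ∈ F | B ⊂ A ∧ #B + 1 = #A}).choose 2
      + (#{A ∈ F | A ⊂ B}).choose 2 * #{A ∈ F | B ⊂ A}) ≤ numButterflies F := by
  classical
  refine le_trans (sum_le_sum ?_) (bf_sum_unique F G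
    (fun B S => (bfP 1 2 B S ∧ ∀ x ∈ S, B ⊂ x → #B + 1 = #x) ∨ bfP 2 1 B S)
    (fun B S h => h.elim (fun h => bfP_butterfly12 h.1) (fun h => bfP_butterfly21 h))
    (fun B B' S h h' => ?_))
  · intro B hB
    have h1 := bfP_count 1 2 (hG hB) (filter_subset (fun A => A ⊂ B) F) (filter_subset (fun A => B ⊂ A ∧ #B + 1 = #A) F)
      (fun A hA => (mem_filter.1 hA).2) (fun A hA => (mem_filter.1 hA).2.1)
    have h2 := bfP_count 2 1 (hG hB) (filter_subset (fun A => A ⊂ B) F) (filter_subset (fun A => B ⊂ A) F)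
      (fun A hA => (mem_filter.1 hA).2) (fun A hA => (mem_filter.1 hA).2)
    rw [Nat.choose_one_right] at h1 h2
    refine (add_le_add h1 h2).trans ?_
    rw [← card_union_of_disjoint]
    · apply card_le_card
      intro S hS
      rw [mem_union, mem_filter, mem_filter] at hS
      refine (@mem_filter _ _ (fun _ => Classical.propDecidable _) _ _).2 ?_
      rcases hS with hS | hS
      · exact ⟨hS.1, Or.inl ⟨hS.2.1, fun x hx hBx => (mem_filter.1 (hS.2.2 x hx hBx)).2.2⟩⟩
      · exact ⟨hS.1, Or.inr hS.2.1⟩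
    · rw [disjoint_left]
      intro S a b
      rw [mem_filter] at a b
      have := a.2.1.2.1
      have := b.2.1.2.1
      omega
  · rcases h with h | h <;> rcases h' with h' | h'
    · exact bfP_unique h.1 h'.1
    · exact (bfP_cross h.1 h.2 h').elim
    · exact (bfP_cross h'.1 h'.2 h).elim
    · exact bfP_unique h h'

end BFcount

section BFreal

set_option maxHeartbeats 1000000 in
lemma bf_heavy_light (η θ s mu n p q a b d u u1 f : ℝ)
    (hη : 0 ≤ η) (hθ : 0 < θ) (hs0 : 0 ≤ s) (hs1 : s ≤ 1) (hmu : 3 ≤ mu) (hp : mu ≤ p) (hq : mu ≤ q)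
    (hpq : q ≤ n) (ha0 : 0 ≤ a) (ha1 : a ≤ 1) (hb0 : 0 ≤ b) (hb1 : b ≤ 1)
    (hd : p * a ≤ d) (hu1 : 0 ≤ u1) (hu : u1 ≤ u) (hb : q * b ≤ u1 + (u - u1) * (2 / (q - 1)))
    (hdc : 0 ≤ d * (d - 1)) (huc : 0 ≤ u * (u - 1)) (hu1c : 0 ≤ u1 * (u1 - 1))
    (hf0 : 0 ≤ f) (hf : f ≤ (n + 1) ^ 3 / 16)
    (h1 : (n + 1) ^ 3 ≤ 8 * ((1 + η) * (mu ^ 2 * (mu * s - 6 * θ * n - 2))))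
    (h2 : (n + 1) ^ 3 ≤ 8 * (η * (mu * (θ * mu ^ 2 * (θ * mu ^ 2 - 1)))))
    (h3 : 1 ≤ θ * mu ^ 2) :
    (a * b - s * ((1 - a) * (1 - b))) * f ≤
      (1 + η) * (d * (u1 * (u1 - 1) / 2) + d * (d - 1) / 2 * u) + η * (d * (u * (u - 1) / 2)) := by
  have hp0 : 0 < p := by linarith
  have hq0 : 0 < q := by linarith
  have hpa : 0 ≤ p * a := by positivity
  have hd0 : 0 ≤ d := hpa.trans hd
  have hu0 : 0 ≤ u := hu1.trans hu
  have hqb : q * b ≤ u := by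
    have : 2 / (q - 1) ≤ 1 := by rw [div_le_one (by linarith)]; linarith
    nlinarith
  have hR1 : 0 ≤ d * (u1 * (u1 - 1) / 2) := by
    have := mul_nonneg hd0 hu1c; linarith
  have hR2 : 0 ≤ d * (d - 1) / 2 * u := by
    have := mul_nonneg hdc hu0; linarith
  have hS : 0 ≤ d * (u * (u - 1) / 2) := by
    have := mul_nonneg hd0 huc; linarith
  have hab0 : 0 ≤ a * b := mul_nonneg ha0 hb0
  have hrhs : 0 ≤ (1 + η) * (d * (u1 * (u1 - 1) / 2) + d * (d - 1) / 2 * u) + η * (d * (u * (u - 1) / 2)) := by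
    positivity
  by_cases hbr : a * b - s * ((1 - a) * (1 - b)) ≤ 0
  · exact (mul_nonpos_of_nonpos_of_nonneg hbr hf0).trans hrhs
  push Not at hbr
  have hab : s ≤ a + b := by
    by_contra hc
    push Not at hc
    have : a * b ≤ s := by nlinarith
    nlinarith [mul_nonneg (sub_nonneg.2 hs1) (sub_nonneg.2 this), mul_nonneg hs0 (sub_nonneg.2 hc.le)]
  have hbb : (a * b - s * ((1 - a) * (1 - b))) * f ≤ a * b * f := by
    apply mul_le_mul_of_nonneg_right _ hf0
    have := mul_nonneg hs0 (mul_nonneg (sub_nonneg.2 ha1) (sub_nonneg.2 hb1))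
    linarith
  refine hbb.trans ?_
  have hbf : a * b * f ≤ a * b * ((n + 1) ^ 3 / 16) := mul_le_mul_of_nonneg_left hf hab0
  refine hbf.trans ?_
  have hmu0 : 0 < mu := by linarith
  have hpq2 : mu ^ 2 ≤ p * q := by rw [sq]; exact mul_le_mul hp hq hmu0.le hp0.le
  have hq2 : mu ^ 2 ≤ q ^ 2 := pow_le_pow_left₀ hmu0.le hq 2
  by_cases hl : u - u1 ≤ θ * q ^ 2
  · have hy : q * (b - 3 * θ) ≤ u1 := by
      have : (u - u1) * (2 / (q - 1)) ≤ 3 * θ * q := by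
        rw [mul_div_assoc', div_le_iff₀ (by linarith)]
        have e : 0 ≤ θ * q * (q - 3) := mul_nonneg (by positivity) (by linarith)
        have e2 : 3 * θ * q * (q - 1) = θ * q * (q - 3) + 2 * (θ * q ^ 2) := by ring
        linarith
      linarith
    have hC1 : q * b * (q * b - 6 * θ * q - 1) ≤ u1 * (u1 - 1) := by
      by_cases hc : q * b - 6 * θ * q - 1 ≤ 0
      · exact (mul_nonpos_of_nonneg_of_nonpos (by positivity) hc).trans hu1c
      · push Not at hc
        have hθq := mul_pos hθ hq0
        have : q * (b - 3 * θ) * (q * (b - 3 * θ) - 1) ≤ u1 * (u1 - 1) := by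
          apply mul_le_mul hy (by linarith) (by linarith) hu1
        have e := mul_pos hθq hθq
        linarith
    have hC2 : p * a * (p * a - 1) ≤ d * (d - 1) := by
      by_cases hc : p * a - 1 ≤ 0
      · exact (mul_nonpos_of_nonneg_of_nonpos hpa hc).trans hdc
      · push Not at hc
        apply mul_le_mul hd (by linarith) (by linarith) hd0
    have hT1 : p * a * (q * b * (q * b - 6 * θ * q - 1)) ≤ d * (u1 * (u1 - 1)) :=
      (mul_le_mul_of_nonneg_left hC1 hpa).trans (mul_le_mul_of_nonneg_right hd hu1c)
    have hT2 : p * a * (p * a - 1) * (q * b) ≤ d * (d - 1) * u :=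
      (mul_le_mul_of_nonneg_right hC2 (by positivity)).trans (mul_le_mul_of_nonneg_left hqb hdc)
    have hX : mu * s - 6 * θ * n - 2 ≤ q * b - 6 * θ * q - 1 + (p * a - 1) := by
      have e1 : mu * s ≤ mu * (a + b) := mul_le_mul_of_nonneg_left hab hmu0.le
      have e2 : mu * a ≤ p * a := mul_le_mul_of_nonneg_right hp ha0
      have e3 : mu * b ≤ q * b := mul_le_mul_of_nonneg_right hq hb0
      have e4 : θ * q ≤ θ * n := mul_le_mul_of_nonneg_left hpq hθ.le
      linarith
    have hX0 : 0 ≤ mu * s - 6 * θ * n - 2 := by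
      by_contra hc
      push Not at hc
      have : 0 ≤ (n + 1) ^ 3 := by have : 0 ≤ n := by linarith
                                   positivity
      have h5 : (1 + η) * (mu ^ 2 * (mu * s - 6 * θ * n - 2)) < 0 :=
        mul_neg_of_pos_of_neg (by linarith) (mul_neg_of_pos_of_neg (by positivity) hc)
      linarith
    have hY : mu ^ 2 * (mu * s - 6 * θ * n - 2) ≤ p * q * (q * b - 6 * θ * q - 1 + (p * a - 1)) :=
      mul_le_mul hpq2 hX hX0 (by positivity)
    have hZ := mul_le_mul_of_nonneg_left hY hab0
    have hR : a * b * (mu ^ 2 * (mu * s - 6 * θ * n - 2)) / 2 ≤ d * (u1 * (u1 - 1) / 2) + d * (d - 1) / 2 * u := by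
      linarith
    have hRR := mul_le_mul_of_nonneg_left hR (by linarith : 0 ≤ 1 + η)
    have hh := mul_le_mul_of_nonneg_left h1 hab0
    have := mul_nonneg hη hS
    linarith
  · push Not at hl
    have hw : θ * mu ^ 2 ≤ u := by have := mul_le_mul_of_nonneg_left hq2 hθ.le; linarith
    have hU : θ * mu ^ 2 * (θ * mu ^ 2 - 1) ≤ u * (u - 1) :=
      mul_le_mul hw (by linarith) (by linarith) hu0
    have hU0 : 0 ≤ θ * mu ^ 2 * (θ * mu ^ 2 - 1) := mul_nonneg (by positivity) (by linarith)
    have hda : mu * (a * b) ≤ d := by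
      have : a * b ≤ a := mul_le_of_le_one_right ha0 hb1
      have e1 := mul_le_mul_of_nonneg_left this hmu0.le
      have e2 := mul_le_mul_of_nonneg_right hp ha0
      linarith
    have hSS : mu * (a * b) * (θ * mu ^ 2 * (θ * mu ^ 2 - 1)) ≤ d * (u * (u - 1)) :=
      mul_le_mul hda hU hU0 hd0
    have hSη := mul_le_mul_of_nonneg_left hSS hη
    have hh := mul_le_mul_of_nonneg_left h2 hab0
    have : 0 ≤ (1 + η) * (d * (u1 * (u1 - 1) / 2) + d * (d - 1) / 2 * u) := by positivity
    linarith

lemma bf_params (η x n s : ℝ) (hη0 : 0 < η) (hη1 : η ≤ 1) (hx0 : 0 < x) (hx : x ≤ η / 100)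
    (hn : 1 ≤ x ^ 2 * n) (hs : 1 - x ≤ s) :
    let mu := n * (1 / 2 - 2 * x)
    3 ≤ mu ∧ (n + 1) ^ 3 ≤ 8 * ((1 + η) * (mu ^ 2 * (mu * s - 6 * x * n - 2))) ∧
    (n + 1) ^ 3 ≤ 8 * (η * (mu * (x * mu ^ 2 * (x * mu ^ 2 - 1)))) ∧ 1 ≤ x * mu ^ 2 := by
  intro mu
  have hx1 : x ≤ 1 / 100 := by linarith
  have hn0 : 0 < n := by
    by_contra hc
    push Not at hc
    nlinarith [sq_nonneg x]
  have hxn : 100 ≤ x * n := by nlinarith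
  have hn1 : 10000 ≤ n := by nlinarith
  have hmu4 : n / 4 ≤ mu := by
    show n / 4 ≤ n * (1 / 2 - 2 * x)
    nlinarith
  have hcube : (n + 1) ^ 3 ≤ n ^ 3 * (1 + 4 * x) := by
    have h1 : n + 1 ≤ n * (1 + x) := by linarith
    calc (n + 1) ^ 3 ≤ (n * (1 + x)) ^ 3 := by gcongr
      _ = n ^ 3 * (1 + 3 * x + 3 * x ^ 2 + x ^ 3) := by ring
      _ ≤ n ^ 3 * (1 + 4 * x) := by
        apply mul_le_mul_of_nonneg_left _ (by positivity)
        nlinarith [mul_pos hx0 hx0, mul_pos (mul_pos hx0 hx0) hx0]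
  have hmul : n ^ 2 / 16 ≤ mu ^ 2 := by nlinarith
  have hxmu : 100 * n / 16 ≤ x * mu ^ 2 := by
    have := mul_le_mul_of_nonneg_left hmul hx0.le
    nlinarith
  refine ⟨by linarith, ?_, ?_, by linarith⟩
  · refine hcube.trans ?_
    have hA : n * (1 / 2 - 21 / 2 * x) ≤ mu * s - 6 * x * n - 2 := by
      have : mu * (1 - x) ≤ mu * s := mul_le_mul_of_nonneg_left hs (by linarith)
      have e : mu * (1 - x) = n * (1 / 2 - 5 / 2 * x + 2 * x ^ 2) := by simp only [mu]; ring
      rw [e] at this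
      have : 0 ≤ n * x ^ 2 := by positivity
      nlinarith
    have hB : mu ^ 2 * (n * (1 / 2 - 21 / 2 * x)) ≤ mu ^ 2 * (mu * s - 6 * x * n - 2) :=
      mul_le_mul_of_nonneg_left hA (by positivity)
    have hC := mul_le_mul_of_nonneg_left hB (by linarith : 0 ≤ 1 + η)
    have hD : 1 + 4 * x ≤ (1 + η) * ((1 - 4 * x) ^ 2 * (1 - 21 * x)) := by
      have : 1 - 29 * x ≤ (1 - 4 * x) ^ 2 * (1 - 21 * x) := by
        nlinarith [mul_pos hx0 hx0, mul_pos (mul_pos hx0 hx0) hx0]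
      have := mul_le_mul_of_nonneg_left this (by linarith : 0 ≤ 1 + η)
      nlinarith
    have hE := mul_le_mul_of_nonneg_left hD (by positivity : 0 ≤ n ^ 3)
    have : 8 * ((1 + η) * (mu ^ 2 * (n * (1 / 2 - 21 / 2 * x)))) = n ^ 3 * ((1 + η) * ((1 - 4 * x) ^ 2 * (1 - 21 * x))) := by
      simp only [mu]; ring
    linarith
  · have h5 : x * (n ^ 2 / 16) ≤ x * mu ^ 2 := mul_le_mul_of_nonneg_left hmul hx0.le
    have h6 : n ≤ x * mu ^ 2 - 1 := by linarith
    have h7 : x * (n ^ 2 / 16) * n ≤ x * mu ^ 2 * (x * mu ^ 2 - 1) :=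
      mul_le_mul h5 h6 (by linarith) (by positivity)
    have h8 : n / 4 * (x * (n ^ 2 / 16) * n) ≤ mu * (x * mu ^ 2 * (x * mu ^ 2 - 1)) :=
      mul_le_mul hmu4 h7 (by positivity) (by linarith)
    have h9 : 100 * x * (n / 4 * (x * (n ^ 2 / 16) * n)) ≤ η * (mu * (x * mu ^ 2 * (x * mu ^ 2 - 1))) :=
      mul_le_mul (by linarith) h8 (by positivity) (by linarith)
    have h10 : 8 * (100 * x * (n / 4 * (x * (n ^ 2 / 16) * n))) = n ^ 3 * (25 / 2 * (x ^ 2 * n)) := by ring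
    have h11 : n ^ 3 * (1 + 4 * x) ≤ n ^ 3 * (25 / 2 * (x ^ 2 * n)) := by
      gcongr; linarith
    linarith

lemma bf_fB_le (n : ℕ) : ((((n + 1) / 2 + 1) * Nat.choose ((n + 1) / 2) 2 : ℕ) : ℝ) ≤ ((n : ℝ) + 1) ^ 3 / 16 := by
  have : (((n + 1) / 2 : ℕ) : ℝ) ≤ ((n : ℝ) + 1) / 2 := by
    have := @Nat.cast_div_le ℝ _ _ _ (n + 1) 2
    push_cast at this ⊢; exact this
  generalize (n + 1) / 2 = K at *
  push_cast
  rw [Nat.cast_choose_two]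
  have hK : (0 : ℝ) ≤ K := Nat.cast_nonneg K
  have h3 : (K : ℝ) ^ 3 ≤ (((n : ℝ) + 1) / 2) ^ 3 := pow_le_pow_left₀ hK this 3
  have h4 : (((n : ℝ) + 1) / 2) ^ 3 = ((n : ℝ) + 1) ^ 3 / 8 := by ring
  have h5 : ((K : ℝ) + 1) * ((K : ℝ) * (K - 1) / 2) = (K : ℝ) ^ 3 / 2 - K / 2 := by ring
  linarith

end BFreal

section BFbinom
open Filter

lemma bf_choose_le_M2 (n j : ℕ) (hj : j ≠ n / 2) : n.choose j ≤ n.choose (n / 2 + 1) := by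
  rcases Nat.lt_or_ge n (n / 2 + 1) with hn | hn
  · have : n = 0 := by omega
    subst this
    have : 0 < j := by omega
    rw [Nat.choose_eq_zero_of_lt this]; exact Nat.zero_le _
  rw [← Nat.choose_symm hn]
  rcases Nat.lt_or_ge n j with h | h
  · rw [Nat.choose_eq_zero_of_lt h]; exact Nat.zero_le _
  rcases Nat.lt_or_ge j (n / 2) with h1 | h1
  · exact bf_choose_mono (by omega) (by omega)
  · rw [← Nat.choose_symm h]
    exact bf_choose_mono (by omega) (by omega)

lemma bf_w (n : ℕ) (hn : 1 ≤ n) :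
    (1 - 2 / (n : ℝ)) * n.choose (n / 2) ≤ n.choose (n / 2 + 1) ∧ n.choose (n / 2 + 1) ≤ n.choose (n / 2) := by
  refine ⟨?_, Nat.choose_le_middle _ _⟩
  have h := Nat.choose_succ_right_eq n (n / 2)
  have h' : (n.choose (n / 2 + 1) : ℝ) * ((n / 2 : ℕ) + 1) = n.choose (n / 2) * (n - (n / 2 : ℕ) : ℕ) := by
    exact_mod_cast h
  have h1 : ((n / 2 : ℕ) : ℝ) ≤ (n - n / 2 : ℕ) := by exact_mod_cast (by omega : n / 2 ≤ n - n / 2)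
  have h2 : (n : ℝ) ≤ 2 * (((n / 2 : ℕ) : ℝ) + 1) := by exact_mod_cast (by omega : n ≤ 2 * (n / 2 + 1))
  have hn0 : (0 : ℝ) < n := by exact_mod_cast hn
  generalize ((n / 2 : ℕ) : ℝ) = k at *
  have hm : (0 : ℝ) ≤ n.choose (n / 2) := Nat.cast_nonneg _
  have hk : 0 < k + 1 := by linarith
  have h3 : (1 - 2 / (n : ℝ)) * (k + 1) ≤ k := by
    have : 2 / (n : ℝ) * (k + 1) ≥ 1 := by
      rw [ge_iff_le, div_mul_eq_mul_div, le_div_iff₀ hn0]; linarith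
    linarith
  have h4 := mul_le_mul_of_nonneg_left (h3.trans h1) hm
  rw [← h'] at h4
  refine le_of_mul_le_mul_right ?_ hk
  linarith

lemma bf_step (n i : ℕ) (x : ℝ) (h : (2 + x) * ((i : ℝ) + 1) ≤ n + 1) (hi : i ≤ n) :
    (1 + x) * n.choose i ≤ n.choose (i + 1) := by
  have h' : (n.choose (i + 1) : ℝ) * ((i : ℝ) + 1) = n.choose i * (n - i) := by
    have := Nat.choose_succ_right_eq n i
    rw [← Nat.cast_sub hi]
    exact_mod_cast this
  have hi1 : (0 : ℝ) < (i : ℝ) + 1 := by positivity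
  refine le_of_mul_le_mul_right ?_ hi1
  rw [h']
  have := mul_le_mul_of_nonneg_left (by linarith : (1 + x) * ((i : ℝ) + 1) ≤ n - i) (Nat.cast_nonneg (n.choose i) : (0:ℝ) ≤ _)
  linarith

lemma bf_steps (n j r : ℕ) (x : ℝ) (hx : 0 ≤ x) (h : (2 + x) * ((j : ℝ) + r) ≤ n + 1) (hi : j + r ≤ n) :
    (1 + x) ^ r * n.choose j ≤ n.choose (j + r) := by
  induction r with
  | zero => simp
  | succ r ih =>
    push_cast at h
    have h1 := ih (by nlinarith) (by omega)
    have h2 := bf_step n (j + r) x (by push_cast; linarith) (by omega)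
    rw [pow_succ, ← add_assoc]
    have := mul_le_mul_of_nonneg_left h1 (by linarith : 0 ≤ 1 + x)
    linarith

lemma bf_pow_event (T : ℕ) (hT : 1 ≤ T) : ∃ r0 : ℕ, ∀ r ≥ r0,
    (2 * (T : ℝ)) ^ 5 * ((r : ℝ) + 1) ^ 5 ≤ (1 + 1 / (T : ℝ)) ^ r := by
  have hT0 : (0 : ℝ) < T := by exact_mod_cast hT
  have hT1 : (1 : ℝ) ≤ T := by exact_mod_cast hT
  have h1 : 1 < 1 + 1 / (T : ℝ) := by have : 0 < 1 / (T : ℝ) := by positivity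
                                      linarith
  have ht := tendsto_pow_const_div_const_pow_of_one_lt 5 h1
  have he := ht.eventually (gt_mem_nhds (by positivity : (0 : ℝ) < 1 / (2 * (2 * (T : ℝ)) ^ 5)))
  obtain ⟨r0, hr⟩ := eventually_atTop.1 he
  refine ⟨r0, fun r hr' => ?_⟩
  have := hr (r + 1) (by omega)
  rw [div_lt_div_iff₀ (by positivity) (by positivity)] at this
  push_cast at this
  have h2 : (1 + 1 / (T : ℝ)) ^ (r + 1) ≤ 2 * (1 + 1 / (T : ℝ)) ^ r := by
    rw [pow_succ, mul_comm]
    apply mul_le_mul_of_nonneg_right _ (by positivity)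
    have : 1 / (T : ℝ) ≤ 1 := by rw [div_le_one hT0]; exact hT1
    linarith
  linarith

lemma bf_far (T : ℕ) (hT : 2 ≤ T) : ∃ N0 : ℕ, ∀ n ≥ N0, ∀ j, j < n / 2 - n / T →
    (n : ℝ) ^ 4 * ((n : ℝ) + 1) * n.choose j ≤ n.choose (n / 2 + 1) := by
  obtain ⟨r0, hr⟩ := bf_pow_event T (by omega)
  refine ⟨2 * T * r0, fun n hn j hj => ?_⟩
  set k := n / T with hk
  set r := n / (2 * T) with hrdef
  have hT0 : (0 : ℝ) < T := by exact_mod_cast (by omega : 0 < T)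
  have hr0 : r0 ≤ r := by
    rw [hrdef, Nat.le_div_iff_mul_le (by omega)]; linarith
  have hrk : 2 * r ≤ k := by
    rw [hk, Nat.le_div_iff_mul_le (by omega)]
    have := Nat.div_mul_le_self n (2 * T)
    rw [← hrdef] at this
    calc 2 * r * T = r * (2 * T) := by ring
      _ ≤ n := this
  have hnr : n + 1 ≤ 2 * T * (r + 1) := by
    have := Nat.lt_mul_div_succ n (by omega : 0 < 2 * T)
    rw [← hrdef] at this; omega
  have hnk : n + 1 ≤ T * (k + 1) := by
    have := Nat.lt_mul_div_succ n (by omega : 0 < T)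
    rw [← hk] at this; omega
  have h1 : (1 + 1 / (T : ℝ)) ^ r * n.choose j ≤ n.choose (j + r) := by
    apply bf_steps n j r _ (by positivity) _ (by omega)
    have e : 2 * (j + r) + k + 2 ≤ n := by omega
    have e' : 2 * ((j : ℝ) + r) + k + 2 ≤ n := by exact_mod_cast e
    have e2 : (n : ℝ) + 1 ≤ T * (k + 1) := by exact_mod_cast hnk
    have e3 : 1 / (T : ℝ) * n ≤ k + 1 := by
      rw [div_mul_eq_mul_div, div_le_iff₀ hT0]; linarith
    have e4 : 1 / (T : ℝ) * ((j : ℝ) + r) ≤ 1 / (T : ℝ) * n := by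
      apply mul_le_mul_of_nonneg_left _ (by positivity)
      exact_mod_cast (by omega : j + r ≤ n)
    linarith
  have h2 : (n.choose (j + r) : ℝ) ≤ n.choose (n / 2 + 1) := by
    exact_mod_cast bf_choose_le_M2 n (j + r) (by omega)
  have h3 : (n : ℝ) ^ 4 * ((n : ℝ) + 1) ≤ (1 + 1 / (T : ℝ)) ^ r := by
    refine le_trans ?_ (hr r hr0)
    have : (n : ℝ) + 1 ≤ 2 * T * (r + 1) := by exact_mod_cast hnr
    calc (n : ℝ) ^ 4 * ((n : ℝ) + 1) ≤ ((n : ℝ) + 1) ^ 4 * ((n : ℝ) + 1) := by gcongr; linarith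
      _ = ((n : ℝ) + 1) ^ 5 := by ring
      _ ≤ (2 * T * (r + 1)) ^ 5 := by gcongr
      _ = _ := by ring
  exact (mul_le_mul_of_nonneg_right h3 (Nat.cast_nonneg _)).trans (h1.trans h2)

end BFbinom

section BFfinal
open Finset Fintype Numbering

lemma bf_extra (v l c a b I S : ℝ) (hv : 0 ≤ v) (hl0 : 0 ≤ l) (hl1 : l ≤ 1) (hvl : v * l ≤ 1) (hc : 0 ≤ c)
    (ha0 : 0 ≤ a) (ha1 : a ≤ 1) (hb0 : 0 ≤ b) (hb1 : b ≤ 1) (hI0 : 0 ≤ I) (hI1 : I ≤ 1) (hS : 0 ≤ S)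
    (h : I = 0 ∨ 1 ≤ S ∨ b ≤ 1 / 2) :
    v * (2 * c * l * I * ((1 - a) * b)) ≤ 2 * c * (v * ((1 - a) * (1 - b))) + 2 * c * S := by
  have ha : 0 ≤ 1 - a := by linarith
  have hb : 0 ≤ 1 - b := by linarith
  have n1 : 0 ≤ 2 * c * (v * ((1 - a) * (1 - b))) := by positivity
  have n2 : 0 ≤ 2 * c * S := by positivity
  rcases h with h | h | h
  · rw [h]; linarith
  · have e1 : v * l * (I * ((1 - a) * b)) ≤ 1 * (1 * (1 * 1)) := by
      gcongr
      linarith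
    have e2 := mul_le_mul_of_nonneg_left (e1.trans (by linarith : 1 * (1 * (1 * 1)) ≤ S)) (by linarith : 0 ≤ 2 * c)
    linarith
  · have e1 : l * I * (v * ((1 - a) * b)) ≤ 1 * 1 * (v * ((1 - a) * (1 - b))) := by
      gcongr
      linarith
    have e2 := mul_le_mul_of_nonneg_left e1 (by linarith : 0 ≤ 2 * c)
    linarith

lemma bf_combine (v w l c a b I1 I2 S1 S2 : ℝ) (hv : 0 ≤ v) (hl0 : 0 ≤ l) (hl1 : l ≤ 1) (hvl : v * l ≤ 1) (hc : 0 ≤ c)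
    (hc6 : 6 * c ≤ 1) (hw : w ≤ v)
    (ha0 : 0 ≤ a) (ha1 : a ≤ 1) (hb0 : 0 ≤ b) (hb1 : b ≤ 1) (hI0 : 0 ≤ I1) (hI1 : I1 ≤ 1) (hS : 0 ≤ S1)
    (h : I1 = 0 ∨ 1 ≤ S1 ∨ b ≤ 1 / 2)
    (hI0' : 0 ≤ I2) (hI1' : I2 ≤ 1) (hS' : 0 ≤ S2)
    (h' : I2 = 0 ∨ 1 ≤ S2 ∨ a ≤ 1 / 2) :
    v * (l * (a * b) - (1 - 2 * c) * ((1 - a) * (1 - b)) + 2 * c * l * I1 * ((1 - a) * b)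
      + 2 * c * l * I2 * (a * (1 - b))) ≤
    a * b - w * (1 - 6 * c) * ((1 - a) * (1 - b)) + 2 * c * (S1 + S2) := by
  have e1 := bf_extra v l c a b I1 S1 hv hl0 hl1 hvl hc ha0 ha1 hb0 hb1 hI0 hI1 hS h
  have e2 := bf_extra v l c b a I2 S2 hv hl0 hl1 hvl hc hb0 hb1 ha0 ha1 hI0' hI1' hS' h'
  have e3 : v * l * (a * b) ≤ 1 * (a * b) := mul_le_mul_of_nonneg_right hvl (by positivity)
  have e4 : w * ((1 - 6 * c) * ((1 - a) * (1 - b))) ≤ v * ((1 - 6 * c) * ((1 - a) * (1 - b))) :=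
    mul_le_mul_of_nonneg_right hw
      (mul_nonneg (by linarith) (mul_nonneg (sub_nonneg.2 ha1) (sub_nonneg.2 hb1)))
  linarith

variable {n : ℕ}

noncomputable def bfLam (n : ℕ) (B : Finset (Fin n)) : ℝ :=
  min 1 ((n.choose #B : ℝ) / n.choose (n / 2 + 1))

lemma bf_K (B : Finset (Fin n)) : (n.choose #B : ℝ) * #(prefixed B) = n.factorial := by
  rw [card_prefixed, Fintype.card_fin]
  have h : #B ≤ n := by simpa using card_le_univ B
  have := Nat.choose_mul_factorial_mul_factorial h
  rw [mul_assoc] at this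
  exact_mod_cast this

lemma bf_size (hn : 1 ≤ n) (F : Finset (Finset (Fin n))) (E : ℕ) (hF : #F = Sigma2 n + E) :
    (E : ℝ) * n.factorial ≤
      n.choose (n / 2 + 1) * (∑ B ∈ F, bfLam n B * #(prefixed B) - 2 * n.factorial) := by
  set M : ℝ := ((n.choose (n / 2 + 1) : ℕ) : ℝ) with hM
  set m : ℝ := ((n.choose (n / 2) : ℕ) : ℝ) with hm
  have hM0 : 0 < M := by
    rw [hM]; exact_mod_cast Nat.choose_pos (by omega)
  have hm0 : 0 < m := by
    rw [hm]; exact_mod_cast Nat.choose_pos (by omega)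
  have hMm : M ≤ m := by
    rw [hm, hM]; exact_mod_cast (bf_w n hn).2
  set N : ℝ := ((n.factorial : ℕ) : ℝ) with hN
  have hN0 : 0 < N := by rw [hN]; exact_mod_cast Nat.factorial_pos n
  have hB : ∀ B ∈ F, N - (if #B = n / 2 then N * (1 - M / m) else 0) ≤ M * (bfLam n B * #(prefixed B)) := by
    intro B _
    have hK := bf_K B
    have hKp := bf_prefixed_pos B
    have hC0 : (0 : ℝ) < n.choose #B := by
      exact_mod_cast Nat.choose_pos (by simpa using card_le_univ B)
    have e : M * (bfLam n B * #(prefixed B)) = min (M * #(prefixed B)) N := by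
      rw [bfLam, ← hM, min_mul_of_nonneg _ _ hKp.le, mul_min_of_nonneg _ _ hM0.le, one_mul]
      congr 1
      rw [hN, ← hK]; field_simp
    rw [e]
    split_ifs with h
    · have hK' : m * #(prefixed B) = N := by rw [hm, hN, ← hK, h]
      have : N - N * (1 - M / m) = M * #(prefixed B) := by
        rw [← hK']; field_simp; ring
      rw [this]
      apply le_min le_rfl
      rw [← hK']; gcongr
    · rw [sub_zero]
      apply le_min _ le_rfl
      rw [hN, ← hK]
      apply mul_le_mul_of_nonneg_right _ hKp.le
      rw [hM]; exact_mod_cast bf_choose_le_M2 n _ h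
  have hs := sum_le_sum hB
  rw [← mul_sum, sum_sub_distrib, ← sum_filter, sum_const, sum_const, nsmul_eq_mul, nsmul_eq_mul, hF] at hs
  have hcard : (#{B ∈ F | #B = n / 2} : ℝ) ≤ m := by
    have : #{B ∈ F | #B = n / 2} ≤ #(powersetCard (n / 2) (univ : Finset (Fin n))) := by
      apply card_le_card
      intro B hB
      rw [mem_powersetCard_univ]
      exact (mem_filter.1 hB).2
    rw [card_powersetCard, card_univ, Fintype.card_fin] at this
    rw [hm]; exact_mod_cast this
  have h1 : 0 ≤ N * (1 - M / m) := by
    apply mul_nonneg hN0.le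
    rw [sub_nonneg, div_le_one hm0]; exact hMm
  have h2 := mul_le_mul_of_nonneg_right hcard h1
  have h3 : m * (N * (1 - M / m)) = N * (m - M) := by field_simp
  unfold Sigma2 at hs
  push_cast at hs
  rw [← hM, ← hm] at hs
  linarith

lemma bf_farsum (hn : 1 ≤ n) (f : Numbering (Fin n)) (S : Finset (Finset (Fin n))) (hS : ∀ B ∈ S, f.IsPrefix B)
    (h : ∀ B ∈ S, (n : ℝ) ^ 4 * ((n : ℝ) + 1) * n.choose #B ≤ n.choose (n / 2 + 1)) :
    ∑ B ∈ S, bfLam n B ≤ 1 / (n : ℝ) ^ 4 := by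
  have hn0 : (0 : ℝ) < n := by exact_mod_cast hn
  have hM0 : (0 : ℝ) < n.choose (n / 2 + 1) := by
    exact_mod_cast Nat.choose_pos (by omega)
  have h1 : ∀ B ∈ S, bfLam n B ≤ 1 / ((n : ℝ) ^ 4 * ((n : ℝ) + 1)) := by
    intro B hB
    refine (min_le_right _ _).trans ?_
    rw [div_le_div_iff₀ hM0 (by positivity)]
    linarith [h B hB]
  have hc : #S ≤ n + 1 := by
    rw [← card_range (n + 1)]
    apply card_le_card_of_injOn (fun B => #B)
    · intro B _
      rw [mem_coe, mem_range]
      have : #B ≤ n := by simpa using card_le_univ B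
      show #B < n + 1
      omega
    · intro A hA B hB hAB
      exact bf_eq_of (hS A hA) (hS B hB) hAB
  have hc' : (#S : ℝ) ≤ n + 1 := by exact_mod_cast hc
  refine (sum_le_sum h1).trans ?_
  rw [sum_const, nsmul_eq_mul]
  calc (#S : ℝ) * (1 / ((n : ℝ) ^ 4 * ((n : ℝ) + 1))) ≤ (n + 1) * (1 / ((n : ℝ) ^ 4 * ((n : ℝ) + 1))) := by gcongr
    _ = _ := by field_simp

end BFfinal

section BFmain
open Finset Fintype Numbering

variable {n : ℕ}

lemma bf_real_mul {p a d1 d : ℝ} (hp : 3 ≤ p) (h : a ≤ d1 / p + (d - d1) * (2 / (p * (p - 1)))) :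
    p * a ≤ d1 + (d - d1) * (2 / (p - 1)) := by
  have := mul_le_mul_of_nonneg_left h (by linarith : 0 ≤ p)
  have h1 : p ≠ 0 := by linarith
  have h2 : p - 1 ≠ 0 := by linarith
  have e : p * (d1 / p + (d - d1) * (2 / (p * (p - 1)))) = d1 + (d - d1) * (2 / (p - 1)) := by
    field_simp
  linarith

lemma bf_real_le {p d1 d : ℝ} (hp : 3 ≤ p) (h : d1 ≤ d) : d1 + (d - d1) * (2 / (p - 1)) ≤ d := by
  have h1 : 2 / (p - 1) ≤ 1 := by rw [div_le_one (by linarith)]; linarith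
  have := mul_le_mul_of_nonneg_left h1 (sub_nonneg.2 h)
  linarith

lemma bf_al {F G : Finset (Finset (Fin n))} (hGF : G ⊆ F) (B : Finset (Fin n)) (hG : ∀ A ∈ G, 3 ≤ #A) (hB : 3 ≤ #B) :
    (#B : ℝ) * bfAl G B ≤ #{A ∈ F | A ⊂ B} := by
  have h := bfAl_le hGF B (fun A hA => by have := hG A hA; omega) (by omega)
  have hB' : (3 : ℝ) ≤ #B := by exact_mod_cast hB
  refine (bf_real_mul hB' h).trans (bf_real_le hB' ?_)
  rw [Nat.cast_le]
  apply card_le_card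
  intro A hA
  rw [mem_filter] at hA ⊢
  exact ⟨hA.1, hA.2.1⟩

lemma bf_be {F G : Finset (Finset (Fin n))} (hGF : G ⊆ F) (B : Finset (Fin n)) (hG : ∀ A ∈ G, 3 ≤ n - #A) (hB : 3 ≤ n - #B) :
    ((n - #B : ℕ) : ℝ) * bfBe G B ≤ #{A ∈ F | B ⊂ A ∧ #B + 1 = #A} +
      ((#{A ∈ F | B ⊂ A} : ℝ) - #{A ∈ F | B ⊂ A ∧ #B + 1 = #A}) * (2 / (((n - #B : ℕ) : ℝ) - 1)) := by
  have h := bfBe_le hGF B (fun A hA => by have := hG A hA; rw [Fintype.card_fin]; omega) (by rw [Fintype.card_fin]; omega)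
  rw [Fintype.card_fin] at h
  have hB' : (3 : ℝ) ≤ (n - #B : ℕ) := by exact_mod_cast hB
  exact bf_real_mul hB' h

lemma bf_u1_le (F : Finset (Finset (Fin n))) (B : Finset (Fin n)) :
    (#{A ∈ F | B ⊂ A ∧ #B + 1 = #A} : ℝ) ≤ #{A ∈ F | B ⊂ A} := by
  rw [Nat.cast_le]
  apply card_le_card
  intro A hA
  rw [mem_filter] at hA ⊢
  exact ⟨hA.1, hA.2.1⟩

lemma bf_nat_mul (k : ℕ) : (0 : ℝ) ≤ k * ((k : ℝ) - 1) := by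
  rcases Nat.eq_zero_or_pos k with h | h
  · rw [h]; simp
  · have : (1 : ℝ) ≤ k := by exact_mod_cast h
    exact mul_nonneg (by linarith) (by linarith)

lemma bf_perB (η x s : ℝ) (hη0 : 0 < η) (hη1 : η ≤ 1) (hx0 : 0 < x) (hx : x ≤ η / 100)
    (hn : 1 ≤ x ^ 2 * n) (hs : 1 - x ≤ s) (hs0 : 0 ≤ s) (hs1 : s ≤ 1)
    {F G : Finset (Finset (Fin n))} (hGF : G ⊆ F) (hG : ∀ A ∈ G, 3 ≤ #A ∧ 3 ≤ n - #A)
    (B : Finset (Fin n)) (hB : B ∈ G) (hp : (n : ℝ) * (1 / 2 - 2 * x) ≤ #B) (hq : (n : ℝ) * (1 / 2 - 2 * x) ≤ (n - #B : ℕ)) :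
    (bfAl G B * bfBe G B - s * ((1 - bfAl G B) * (1 - bfBe G B))) * fB n ≤
      (1 + η) * ((#{A ∈ F | A ⊂ B} * (#{A ∈ F | B ⊂ A ∧ #B + 1 = #A}).choose 2
      + (#{A ∈ F | A ⊂ B}).choose 2 * #{A ∈ F | B ⊂ A} : ℕ) : ℝ)
      + η * ((#{A ∈ F | A ⊂ B} * (#{A ∈ F | B ⊂ A}).choose 2 : ℕ) : ℝ) := by
  obtain ⟨h0, h1, h2, h3⟩ := bf_params η x n s hη0 hη1 hx0 hx hn hs
  have := bf_heavy_light η x s (n * (1 / 2 - 2 * x)) n #B (n - #B : ℕ) (bfAl G B) (bfBe G B)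
    #{A ∈ F | A ⊂ B} #{A ∈ F | B ⊂ A} #{A ∈ F | B ⊂ A ∧ #B + 1 = #A} (fB n) hη0.le hx0 hs0 hs1 h0 hp hq
    (by exact_mod_cast Nat.sub_le n #B) (bfAl_nonneg G B) (bfAl_le_one G B) (bfBe_nonneg G B) (bfBe_le_one G B)
    (bf_al hGF B (fun A hA => (hG A hA).1) (hG B hB).1) (Nat.cast_nonneg _) (bf_u1_le F B)
    (bf_be hGF B (fun A hA => (hG A hA).2) (hG B hB).2) (bf_nat_mul _) (bf_nat_mul _) (bf_nat_mul _)
    (Nat.cast_nonneg _) (bf_fB_le n) h1 h2 h3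
  push_cast [Nat.cast_choose_two]
  exact this

lemma bf_lam_le_one (B : Finset (Fin n)) : bfLam n B ≤ 1 := min_le_left _ _
lemma bf_lam_nonneg (B : Finset (Fin n)) : 0 ≤ bfLam n B := le_min zero_le_one (by positivity)

set_option maxHeartbeats 2000000 in
lemma bf_main (δ : ℝ) (hδ0 : 0 < δ) (hδ1 : δ < 1) :
    ∃ n₀ : ℕ, ∀ n : ℕ, n₀ ≤ n → ∀ E : ℕ, 
      ∀ F : Finset (Finset (Fin n)), F.card = Sigma2 n + E →
      (1 - δ) * E * fB n ≤ (numButterflies F : ℝ) := by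
  set η := δ / 3 with hη
  have hη0 : 0 < η := by positivity
  have hη1 : η ≤ 1 := by rw [hη]; linarith
  obtain ⟨T, hT⟩ := exists_nat_ge (100 / η)
  have hT100 : (100 : ℝ) ≤ T := by
    refine le_trans ?_ hT
    rw [le_div_iff₀ hη0]; linarith
  have hTn : 100 ≤ T := by exact_mod_cast hT100
  have hT0 : (0 : ℝ) < T := by linarith
  obtain ⟨N0, hN0⟩ := bf_far T (by omega)
  refine ⟨max N0 (T ^ 2), fun n hn E F hF => ?_⟩
  have hnN : N0 ≤ n := (le_max_left _ _).trans hn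
  have hnT : T ^ 2 ≤ n := (le_max_right _ _).trans hn
  have hfar := hN0 n hnN
  have hnT' : (T : ℝ) ^ 2 ≤ n := by exact_mod_cast hnT
  set x : ℝ := 1 / T with hx
  have hx0 : 0 < x := by positivity
  have hxη : x ≤ η / 100 := by
    rw [hx, div_le_div_iff₀ hT0 (by norm_num)]
    rw [div_le_iff₀ hη0] at hT; linarith
  have hxT : x * T = 1 := by rw [hx]; field_simp
  have hn0 : (0 : ℝ) < n := by have := pow_pos hT0 2; linarith
  have hn1 : 1 ≤ n := by exact_mod_cast hn0
  have hx1 : x ≤ 1 / 100 := by linarith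
  have hxn2 : 1 ≤ x ^ 2 * n := by
    calc 1 = x ^ 2 * (T : ℝ) ^ 2 := by rw [← mul_pow, hxT, one_pow]
      _ ≤ x ^ 2 * n := by gcongr
  have hxn : 100 ≤ x * n := by
    have : x ^ 2 * n ≤ 1 / 100 * (x * n) := by
      rw [sq, mul_assoc]; exact mul_le_mul_of_nonneg_right hx1 (by positivity)
    linarith
  have hn100 : (10000 : ℝ) ≤ n := by
    have : x * n ≤ 1 / 100 * n := mul_le_mul_of_nonneg_right hx1 hn0.le
    linarith
  set c : ℝ := 1 / (n : ℝ) ^ 4 with hc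
  have hc0 : 0 < c := by positivity
  have hcn : c * n ^ 4 = 1 := by rw [hc]; field_simp
  have hc1 : c ≤ 1 / (n : ℝ) := by
    rw [hc]
    apply one_div_le_one_div_of_le hn0
    exact le_self_pow₀ (by linarith) (by norm_num)
  have hinv : 1 / (n : ℝ) ≤ x / 100 := by
    rw [div_le_iff₀ hn0]; linarith
  set M : ℝ := ((n.choose (n / 2 + 1) : ℕ) : ℝ) with hM
  set m : ℝ := ((n.choose (n / 2) : ℕ) : ℝ) with hm
  have hM0 : 0 < M := by
    rw [hM]; exact_mod_cast Nat.choose_pos (by omega)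
  have hm0 : 0 < m := by
    rw [hm]; exact_mod_cast Nat.choose_pos (by omega)
  have hMm : M ≤ m := by
    rw [hm, hM]; exact_mod_cast (bf_w n hn1).2
  set w := M / m with hw
  have hw1 : w ≤ 1 := by rw [hw, div_le_one hm0]; exact hMm
  have hw0 : 1 - 2 / (n : ℝ) ≤ w := by
    rw [hw, le_div_iff₀ hm0]; exact (bf_w n hn1).1
  have h2n : 2 / (n : ℝ) = 2 * (1 / n) := by ring
  rw [h2n] at hw0
  set s := w * (1 - 6 * c) with hs
  have hw00 : 0 ≤ w := by linarith
  have hs1 : s ≤ 1 := mul_le_one₀ hw1 (by linarith) (by linarith)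
  have hsx : 1 - x ≤ s := by
    have : w * (6 * c) ≤ 1 * (6 * c) := mul_le_mul_of_nonneg_right hw1 (by linarith)
    rw [hs, mul_sub, mul_one]
    linarith
  set L := n / 2 - n / T with hL
  set H := n / 2 + 1 + n / T with hH
  set G := {B ∈ F | L ≤ #B ∧ #B ≤ H} with hG
  have hGF : G ⊆ F := filter_subset _ _
  have hlow : ∀ f : Numbering (Fin n), ∑ B ∈ F with f.IsPrefix B ∧ #B < L, bfLam n B ≤ c := by
    intro f
    apply bf_farsum hn1 f
    · intro B hB; exact (mem_filter.1 hB).2.1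
    · intro B hB; exact hfar _ (mem_filter.1 hB).2.2
  have hhigh : ∀ f : Numbering (Fin n), ∑ B ∈ F with f.IsPrefix B ∧ H < #B, bfLam n B ≤ c := by
    intro f
    apply bf_farsum hn1 f
    · intro B hB; exact (mem_filter.1 hB).2.1
    · intro B hB
      have h1 := (mem_filter.1 hB).2.2
      have h2 : #B ≤ n := by simpa using card_le_univ B
      rw [← Nat.choose_symm h2]
      apply hfar
      omega
  have hnTx : ((n / T : ℕ) : ℝ) ≤ x * n := by
    have := @Nat.cast_div_le ℝ _ _ _ n T
    rw [hx]
    calc ((n / T : ℕ) : ℝ) ≤ n / T := this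
      _ = _ := by ring
  have hnear : ∀ A ∈ G, (n : ℝ) * (1 / 2 - 2 * x) ≤ #A ∧ (n : ℝ) * (1 / 2 - 2 * x) ≤ (n - #A : ℕ) := by
    intro A hA
    obtain ⟨_, h1, h2⟩ := mem_filter.1 hA
    constructor
    · have : n ≤ 2 * (#A + n / T) + 1 := by omega
      have : (n : ℝ) ≤ 2 * (#A + (n / T : ℕ)) + 1 := by exact_mod_cast this
      linarith
    · have : n ≤ 2 * ((n - #A) + n / T) + 2 := by omega
      have : (n : ℝ) ≤ 2 * (((n - #A : ℕ) : ℝ) + (n / T : ℕ)) + 2 := by exact_mod_cast this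
      linarith
  have hG3 : ∀ A ∈ G, 3 ≤ #A ∧ 3 ≤ n - #A := by
    intro A hA
    have h3 : (3 : ℝ) ≤ (n : ℝ) * (1 / 2 - 2 * x) := by
      have : (n : ℝ) * (1 / 4) ≤ (n : ℝ) * (1 / 2 - 2 * x) := mul_le_mul_of_nonneg_left (by linarith) hn0.le
      linarith
    obtain ⟨h1, h2⟩ := hnear A hA
    exact ⟨by exact_mod_cast h3.trans h1, by exact_mod_cast h3.trans h2⟩
  have hexp := bf_expect F L H (bfLam n) c bf_lam_nonneg bf_lam_le_one hc0.le (by linarith) hlow hhigh G hG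
  have hsize := bf_size hn1 F E hF
  rw [Fintype.card_fin] at hexp
  have hexp2 := hsize.trans (mul_le_mul_of_nonneg_left hexp hM0.le)
  have hfac : (0 : ℝ) < n.factorial := by exact_mod_cast Nat.factorial_pos n
  set R : Finset (Fin n) → ℕ := fun B => #{A ∈ F | A ⊂ B} * (#{A ∈ F | B ⊂ A ∧ #B + 1 = #A}).choose 2
      + (#{A ∈ F | A ⊂ B}).choose 2 * #{A ∈ F | B ⊂ A} with hR
  set S : Finset (Fin n) → ℕ := fun B => #{A ∈ F | A ⊂ B} * (#{A ∈ F | B ⊂ A}).choose 2 with hS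
  have hRN : ∑ B ∈ G, (R B : ℝ) ≤ numButterflies F := by exact_mod_cast bf_count_R hGF
  have hSN : ∑ B ∈ G, (S B : ℝ) ≤ numButterflies F := by exact_mod_cast bf_count_S1 hGF
  have hterm : (E : ℝ) ≤ ∑ B ∈ G, (bfAl G B * bfBe G B - s * ((1 - bfAl G B) * (1 - bfBe G B))
      + 2 * c * ((S B : ℝ) + R B)) := by
    refine le_of_mul_le_mul_right ?_ hfac
    refine hexp2.trans ?_
    rw [mul_sum, sum_mul]
    apply sum_le_sum
    intro B hB
    have hK := bf_K B
    have hKp := bf_prefixed_pos B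
    have hC0 : (0 : ℝ) < n.choose #B := by
      exact_mod_cast Nat.choose_pos (by simpa using card_le_univ B)
    have hCm : (n.choose #B : ℝ) ≤ m := by
      rw [hm]; exact_mod_cast Nat.choose_le_middle _ _
    have hal := bf_al hGF B (fun A hA => (hG3 A hA).1) (hG3 B hB).1
    have hbe := (bf_be hGF B (fun A hA => (hG3 A hA).2) (hG3 B hB).2).trans
      (bf_real_le (by exact_mod_cast (hG3 B hB).2) (bf_u1_le F B))
    have hp3 : (3 : ℝ) ≤ #B := by exact_mod_cast (hG3 B hB).1
    have hq3 : (3 : ℝ) ≤ (n - #B : ℕ) := by exact_mod_cast (hG3 B hB).2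
    have hI1 : bfInd (∃ A ∈ F, #A < L ∧ A ⊂ B) = 0 ∨ (1 : ℝ) ≤ S B ∨ bfBe G B ≤ 1 / 2 := by
      by_cases hP : ∃ A ∈ F, #A < L ∧ A ⊂ B
      · right
        obtain ⟨A, hA, _, hAB⟩ := hP
        have hd : 0 < #{A ∈ F | A ⊂ B} := card_pos.2 ⟨A, mem_filter.2 ⟨hA, hAB⟩⟩
        rcases Nat.lt_or_ge #{A ∈ F | B ⊂ A} 2 with hu | hu
        · right
          have hu' : (#{A ∈ F | B ⊂ A} : ℝ) ≤ 1 := by exact_mod_cast (by omega : #{A ∈ F | B ⊂ A} ≤ 1)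
          have := mul_le_mul_of_nonneg_right hq3 (bfBe_nonneg G B)
          linarith
        · left
          have : 0 < S B := Nat.mul_pos hd (Nat.choose_pos hu)
          exact_mod_cast this
      · left; exact bfInd_false hP
    have hI2 : bfInd (∃ A ∈ F, H < #A ∧ B ⊂ A) = 0 ∨ (1 : ℝ) ≤ R B ∨ bfAl G B ≤ 1 / 2 := by
      by_cases hP : ∃ A ∈ F, H < #A ∧ B ⊂ A
      · right
        obtain ⟨A, hA, _, hAB⟩ := hP
        have hu : 0 < #{A ∈ F | B ⊂ A} := card_pos.2 ⟨A, mem_filter.2 ⟨hA, hAB⟩⟩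
        rcases Nat.lt_or_ge #{A ∈ F | A ⊂ B} 2 with hd | hd
        · right
          have hd' : (#{A ∈ F | A ⊂ B} : ℝ) ≤ 1 := by exact_mod_cast (by omega : #{A ∈ F | A ⊂ B} ≤ 1)
          have := mul_le_mul_of_nonneg_right hp3 (bfAl_nonneg G B)
          linarith
        · left
          have : 0 < R B := Nat.add_pos_right _ (Nat.mul_pos (Nat.choose_pos hd) hu)
          exact_mod_cast this
      · left; exact bfInd_false hP
    have hMC : M / n.choose #B * n.factorial = M * #(prefixed B) := by
      rw [← hK]; field_simp
    have hvl : M / n.choose #B * bfLam n B ≤ 1 := by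
      calc M / n.choose #B * bfLam n B ≤ M / n.choose #B * (n.choose #B / M) := by
            apply mul_le_mul_of_nonneg_left (min_le_right _ _) (by positivity)
        _ = 1 := by field_simp
    have hcomb := bf_combine (M / n.choose #B) w (bfLam n B) c (bfAl G B) (bfBe G B)
      (bfInd (∃ A ∈ F, #A < L ∧ A ⊂ B)) (bfInd (∃ A ∈ F, H < #A ∧ B ⊂ A)) (S B) (R B)
      (by positivity) (bf_lam_nonneg B) (bf_lam_le_one B) hvl hc0.le (by linarith)
      (by rw [hw]; gcongr)
      (bfAl_nonneg G B) (bfAl_le_one G B) (bfBe_nonneg G B) (bfBe_le_one G B)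
      (bfInd_nonneg _) (bfInd_le_one _) (Nat.cast_nonneg _) hI1
      (bfInd_nonneg _) (bfInd_le_one _) (Nat.cast_nonneg _) hI2
    have := mul_le_mul_of_nonneg_right hcomb hfac.le
    rw [mul_right_comm, hMC, mul_assoc] at this
    exact this
  have hf0 : (0 : ℝ) ≤ fB n := Nat.cast_nonneg _
  have hcf : 4 * (c * fB n) ≤ η := by
    have h1 : (fB n : ℝ) ≤ n ^ 3 := by
      refine (bf_fB_le n).trans ?_
      have : ((n : ℝ) + 1) ^ 3 ≤ (2 * n) ^ 3 := by gcongr; linarith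
      have e : (2 * (n : ℝ)) ^ 3 = 8 * n ^ 3 := by ring
      have : (0 : ℝ) ≤ (n : ℝ) ^ 3 := by positivity
      linarith
    have h2 : c * fB n ≤ c * n ^ 3 := mul_le_mul_of_nonneg_left h1 hc0.le
    have h3 : c * n ^ 3 = 1 / n := by rw [hc]; field_simp
    linarith
  have hfin : (E : ℝ) * fB n ≤ ∑ B ∈ G, ((1 + η) * (R B : ℝ) + η * S B + 2 * (c * fB n) * ((S B : ℝ) + R B)) := by
    refine (mul_le_mul_of_nonneg_right hterm hf0).trans ?_
    rw [sum_mul]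
    apply sum_le_sum
    intro B hB
    have := bf_perB η x s hη0 hη1 hx0 hxη hxn2 hsx (by linarith) hs1 hGF hG3 B hB (hnear B hB).1 (hnear B hB).2
    have e : (bfAl G B * bfBe G B - s * ((1 - bfAl G B) * (1 - bfBe G B)) + 2 * c * ((S B : ℝ) + R B)) * fB n
      = (bfAl G B * bfBe G B - s * ((1 - bfAl G B) * (1 - bfBe G B))) * fB n + 2 * (c * fB n) * ((S B : ℝ) + R B) := by ring
    rw [e]
    exact add_le_add_left this _
  rw [sum_add_distrib, sum_add_distrib, ← mul_sum, ← mul_sum, ← mul_sum, sum_add_distrib] at hfin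
  have hN : (0 : ℝ) ≤ numButterflies F := Nat.cast_nonneg _
  have g1 := mul_le_mul_of_nonneg_left hRN (by linarith : 0 ≤ 1 + η)
  have g2 := mul_le_mul_of_nonneg_left hSN hη0.le
  have hcf0 : 0 ≤ 2 * (c * fB n) := by positivity
  have g3 := mul_le_mul_of_nonneg_left (add_le_add hSN hRN) hcf0
  have g4 := mul_le_mul_of_nonneg_right hcf hN
  have g5 : (E : ℝ) * fB n ≤ (1 + δ) * numButterflies F := by
    have : δ = 3 * η := by rw [hη]; ring
    rw [this]; linarith
  have g6 := mul_le_mul_of_nonneg_left g5 (by linarith : 0 ≤ 1 - δ)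
  have g7 : 0 ≤ δ ^ 2 * numButterflies F := by positivity
  linarith

end BFmain

/-- Main theorem, part (a): for `1 ≤ E ≤ 2^(n^(1-ε))`, every `F ⊆ 2^[n]` with
`|F| = Σ(n,2) + E` contains at least `(1−δ)·E·f(n)` copies of the butterfly. -/
theorem supersat_butterfly_asymptotic (ε δ : ℝ) (hε : 0 < ε ∧ ε < 1) (hδ : 0 < δ ∧ δ < 1) :
    ∃ n₀ : ℕ, ∀ n : ℕ, n₀ ≤ n → ∀ E : ℕ, 1 ≤ E →
      (E : ℝ) ≤ (2 : ℝ) ^ ((n : ℝ) ^ (1 - ε)) →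
      ∀ F : Finset (Finset (Fin n)), F.card = Sigma2 n + E →
      (1 - δ) * E * fB n ≤ (numButterflies F : ℝ) := by
  obtain ⟨n₀, h⟩ := bf_main δ hδ.1 hδ.2
  exact ⟨n₀, fun n hn E _ _ F hF => h n hn E F hF⟩
end
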